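/- Let a, b, c be positive integers each of which is a perfect square, and let Λ ⊆ ℕ be a set of positive multiplicative density. Then (1) there exist distinct x, y ∈ Λ and z ∈ ℕ such that a·x² + b·y² = c·z²; and (2) there exist distinct y, z ∈ Λ and x ∈ ℕ such that a·x² + b·y² = c·z². -/

import Mathlib

open Filter

/-- `Φ` is a multiplicative Følner sequence in `ℕ = {1, 2, …}`: a sequence of finite
nonempty sets of positive integers which is asymptotically invariant under dilation. -/
def IsMulFolner (Φ : ℕ → Finset ℕ) : Prop :=
  (∀ K, (Φ K).Nonempty) ∧ (∀ K, ∀ n ∈ Φ K, 0 < n) ∧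
    ∀ x : ℕ, 0 < x →
      Tendsto (fun K => ((Φ K ∩ (Φ K).image (fun n => x * n)).card : ℝ) / ((Φ K).card : ℝ))
        atTop (nhds 1)

-- The upper multiplicative density of `Λ` with respect to the sequence `Φ`.
open scoped Classical in
noncomputable def upMulDens (Φ : ℕ → Finset ℕ) (Λ : Set ℕ) : ℝ :=
  limsup (fun K => (((Φ K).filter (fun n => n ∈ Λ)).card : ℝ) / ((Φ K).card : ℝ)) atTop

set_option linter.all false


/-- Bounded real function. -/
@[fun_prop]
def Bd {X : Type} (f : X → ℝ) : Prop := ∃ C, ∀ x, |f x| ≤ C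

namespace Bd
variable {X Y : Type}
@[fun_prop]
theorem const (c : ℝ) : Bd (fun _ : X => c) := ⟨|c|, fun _ => le_rfl⟩
theorem comp' {f : X → ℝ} (hf : Bd f) (g : Y → X) : Bd (fun y => f (g y)) := by
  obtain ⟨C, hC⟩ := hf
  exact ⟨C, fun y => hC _⟩
@[fun_prop]
theorem add {f g : X → ℝ} (hf : Bd f) (hg : Bd g) : Bd (fun x => f x + g x) := by
  obtain ⟨C, hC⟩ := hf
  obtain ⟨D, hD⟩ := hg
  exact ⟨C + D, fun x => (abs_add_le _ _).trans (add_le_add (hC x) (hD x))⟩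
@[fun_prop]
theorem mul {f g : X → ℝ} (hf : Bd f) (hg : Bd g) : Bd (fun x => f x * g x) := by
  obtain ⟨C, hC⟩ := hf
  obtain ⟨D, hD⟩ := hg
  refine ⟨C * D, fun x => ?_⟩
  rw [abs_mul]
  exact mul_le_mul (hC x) (hD x) (abs_nonneg _) ((abs_nonneg _).trans (hC x))
@[fun_prop]
theorem neg {f : X → ℝ} (hf : Bd f) : Bd (fun x => - f x) := by
  obtain ⟨C, hC⟩ := hf
  exact ⟨C, fun x => by simpa using hC x⟩
@[fun_prop]
theorem sub {f g : X → ℝ} (hf : Bd f) (hg : Bd g) : Bd (fun x => f x - g x) := by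
  simpa [sub_eq_add_neg] using hf.add hg.neg
@[fun_prop]
theorem pow {f : X → ℝ} (hf : Bd f) (n : ℕ) : Bd (fun x => f x ^ n) := by
  induction n with
  | zero => simpa using Bd.const (X := X) 1
  | succ n ih => simpa [pow_succ] using ih.mul hf
@[fun_prop]
theorem abs {f : X → ℝ} (hf : Bd f) : Bd (fun x => |f x|) := by
  obtain ⟨C, hC⟩ := hf
  exact ⟨C, fun x => by simpa using hC x⟩
@[fun_prop]
theorem sum {ι : Type} (s : Finset ι) {f : ι → X → ℝ} (hf : ∀ i, Bd (f i)) :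
    Bd (fun x => ∑ i ∈ s, f i x) := by
  classical
  induction s using Finset.induction_on with
  | empty => simpa using Bd.const (X := X) 0
  | insert a s ha ih => simpa [Finset.sum_insert ha] using (hf a).add ih
end Bd

structure Mean (X : Type) where
  E : (X → ℝ) → ℝ
  add : ∀ f g, Bd f → Bd g → E (fun x => f x + g x) = E f + E g
  smul : ∀ (c : ℝ) f, Bd f → E (fun x => c * f x) = c * E f
  mono : ∀ f g, Bd f → Bd g → (∀ x, f x ≤ g x) → E f ≤ E g
  one : E (fun _ => 1) = 1

namespace Mean
variable {X Y : Type} (μ : Mean X)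

theorem const (c : ℝ) : μ.E (fun _ => c) = c := by
  have := μ.smul c (fun _ => 1) (Bd.const 1)
  simpa [μ.one] using this
theorem neg {f : X → ℝ} (hf : Bd f) : μ.E (fun x => - f x) = - μ.E f := by
  simpa using μ.smul (-1) f hf
theorem sub {f g : X → ℝ} (hf : Bd f) (hg : Bd g) :
    μ.E (fun x => f x - g x) = μ.E f - μ.E g := by
  have := μ.add f (fun x => - g x) hf hg.neg
  rw [μ.neg hg] at this
  simpa [sub_eq_add_neg] using this
theorem sum {ι : Type} (s : Finset ι) {f : ι → X → ℝ} (hf : ∀ i, Bd (f i)) :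
    μ.E (fun x => ∑ i ∈ s, f i x) = ∑ i ∈ s, μ.E (f i) := by
  classical
  induction s using Finset.induction_on with
  | empty => simpa using μ.const 0
  | insert a s ha ih =>
    simp only [Finset.sum_insert ha]
    rw [μ.add _ _ (hf a) (Bd.sum s hf), ih]
theorem le_const {f : X → ℝ} {C : ℝ} (hf : Bd f) (h : ∀ x, f x ≤ C) : μ.E f ≤ C := by
  simpa [μ.const] using μ.mono f (fun _ => C) hf (Bd.const C) h
theorem const_le {f : X → ℝ} {C : ℝ} (hf : Bd f) (h : ∀ x, C ≤ f x) : C ≤ μ.E f := by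
  simpa [μ.const] using μ.mono (fun _ => C) f (Bd.const C) hf h
theorem abs_le {f : X → ℝ} {C : ℝ} (h : ∀ x, |f x| ≤ C) : |μ.E f| ≤ C :=
  _root_.abs_le.2 ⟨μ.const_le ⟨C, h⟩ fun x => (_root_.abs_le.1 (h x)).1,
    μ.le_const ⟨C, h⟩ fun x => (_root_.abs_le.1 (h x)).2⟩
theorem sq_le {f : X → ℝ} (hf : Bd f) : μ.E f ^ 2 ≤ μ.E (fun x => f x ^ 2) := by
  have h := μ.mono (fun x => (2 * μ.E f) * f x) (fun x => f x ^ 2 + μ.E f ^ 2) (by fun_prop)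
    (by fun_prop) (fun x => by nlinarith [sq_nonneg (f x - μ.E f)])
  rw [μ.smul _ _ hf, μ.add _ _ (hf.pow 2) (Bd.const _), μ.const] at h
  nlinarith
/-- vanishing of `f` in mean when dominated by a null function -/
theorem eq_of_abs_sub_le {f g h : X → ℝ} (hf : Bd f) (hg : Bd g) (hh : Bd h)
    (h0 : μ.E h = 0) (hle : ∀ x, |f x - g x| ≤ h x) : μ.E f = μ.E g := by
  have h1 := μ.mono _ _ (hf.sub hg) hh (fun x => (le_abs_self _).trans (hle x))
  have h2 := μ.mono _ _ (hf.sub hg).neg hh (fun x => (neg_le_abs _).trans (hle x))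
  rw [μ.neg (hf.sub hg)] at h2
  rw [μ.sub hf hg] at h1 h2
  linarith

theorem bd_inner (β : Mean Y) {F : X × Y → ℝ} (hF : Bd F) :
    Bd (fun x => β.E (fun y => F (x, y))) := by
  obtain ⟨C, hC⟩ := hF
  exact ⟨C, fun x => β.abs_le fun y => hC _⟩
theorem bd_inner' (β : Mean Y) {F : X → Y → ℝ} (hF : Bd (fun p : X × Y => F p.1 p.2)) :
    Bd (fun x => β.E (fun y => F x y)) := bd_inner β hF

def prod (α : Mean X) (β : Mean Y) : Mean (X × Y) where
  E F := α.E (fun x => β.E (fun y => F (x, y)))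
  add f g hf hg := by
    rw [← α.add _ _ (bd_inner β hf) (bd_inner β hg)]
    congr 1; ext x
    exact β.add _ _ (hf.comp' _) (hg.comp' _)
  smul c f hf := by
    rw [← α.smul _ _ (bd_inner β hf)]
    congr 1; ext x
    exact β.smul _ _ (hf.comp' _)
  mono f g hf hg h := α.mono _ _ (bd_inner β hf) (bd_inner β hg) fun x =>
    β.mono _ _ (hf.comp' _) (hg.comp' _) fun y => h _
  one := by simp [β.const, α.const]

def map (α : Mean X) (φ : X → Y) : Mean Y where
  E F := α.E (fun x => F (φ x))
  add f g hf hg := α.add _ _ (hf.comp' _) (hg.comp' _)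
  smul c f hf := α.smul _ _ (hf.comp' _)
  mono f g hf hg h := α.mono _ _ (hf.comp' _) (hg.comp' _) fun x => h _
  one := α.one

/-- affine invariance -/
def Aff (α : Mean ℚ) : Prop :=
  ∀ (a b : ℚ) (f : ℚ → ℝ), a ≠ 0 → Bd f → α.E (fun n => f (a * n + b)) = α.E f

theorem bd_ind (P : X → Prop) [DecidablePred P] : Bd (fun x => if P x then (1:ℝ) else 0) :=
  ⟨1, fun x => by by_cases h : P x <;> simp [h]⟩

theorem Aff.single {α : Mean ℚ} (h : α.Aff) (x : ℚ) :
    α.E (fun n => if n = x then (1:ℝ) else 0) = 0 := by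
  have h0 : 0 ≤ α.E (fun n => if n = x then (1:ℝ) else 0) :=
    α.const_le (bd_ind _) fun n => by split_ifs <;> simp
  have hN : ∀ N : ℕ, N * α.E (fun n => if n = x then (1:ℝ) else 0) ≤ 1 := by
    intro N
    have h1 : α.E (fun n => ∑ i ∈ Finset.range N, if (1:ℚ) * n + i = x then (1:ℝ) else 0) ≤ 1 := by
      apply α.le_const (Bd.sum _ fun i => bd_ind _)
      intro n
      rw [Finset.sum_boole]
      have : (Finset.filter (fun i : ℕ => (1:ℚ) * n + i = x) (Finset.range N)).card ≤ 1 := by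
        rw [Finset.card_le_one]
        intro a ha b hb
        simp only [Finset.mem_filter] at ha hb
        have : (a:ℚ) = b := by linarith [ha.2, hb.2]
        exact_mod_cast this
      exact_mod_cast this
    rw [α.sum _ fun i => bd_ind _] at h1
    have h2 : ∀ i : ℕ, α.E (fun n => if (1:ℚ) * n + i = x then (1:ℝ) else 0)
        = α.E (fun n => if n = x then (1:ℝ) else 0) := fun i =>
      h 1 i (fun n => if n = x then (1:ℝ) else 0) one_ne_zero (bd_ind _)
    simp only [h2] at h1
    simpa using h1
  by_contra hne
  have hp := lt_of_le_of_ne h0 (Ne.symm hne)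
  obtain ⟨N, hN'⟩ := exists_nat_gt (1 / α.E (fun n => if n = x then (1:ℝ) else 0))
  rw [div_lt_iff₀ hp] at hN'
  linarith [hN N]

theorem Aff.congr {α : Mean ℚ} (h : α.Aff) (S : Finset ℚ) {f g : ℚ → ℝ} (hf : Bd f) (hg : Bd g)
    (hfg : ∀ n, n ∉ S → f n = g n) : α.E f = α.E g := by
  obtain ⟨C, hC⟩ := hf.sub hg
  refine α.eq_of_abs_sub_le (h := fun n => C * ∑ x ∈ S, if n = x then (1:ℝ) else 0) hf hg
    ((Bd.const C).mul (Bd.sum _ fun i => bd_ind _)) ?_ ?_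
  · rw [α.smul _ _ (Bd.sum _ fun i => bd_ind _), α.sum _ fun i => bd_ind _]
    simp [h.single]
  · intro n
    by_cases hn : n ∈ S
    · simpa [hn] using hC n
    · simp [hn, hfg n hn]

/-- law of `n₁ - 1/n₂` -/
def star (α β : Mean ℚ) : Mean ℚ := (prod α β).map (fun p => p.1 - 1 / p.2)

theorem star_E (α β : Mean ℚ) (f : ℚ → ℝ) :
    (star α β).E f = α.E (fun x => β.E (fun y => f (x - 1 / y))) := rfl

theorem Aff.star {α β : Mean ℚ} (ha : α.Aff) (hb : β.Aff) : (Mean.star α β).Aff := by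
  intro a b f h0 hf
  simp only [star_E]
  rw [← ha a b (fun x => β.E (fun y => f (x - 1 / y))) h0
    (bd_inner' β (hf.comp' (fun p : ℚ × ℚ => p.1 - 1 / p.2)))]
  congr 1; ext x
  rw [← hb a 0 (fun y => f (a * (x - 1 / y) + b)) h0 (hf.comp' _)]
  rw [← hb 1 0 (fun y => f (a * x + b - 1 / y)) one_ne_zero (hf.comp' _)]
  congr 1; ext y
  congr 1
  by_cases hy : y = 0
  · simp [hy]
  · simp only [one_mul, add_zero]
    field_simp
    ring

end Mean


structure QRep (H : Type) [NormedAddCommGroup H] [InnerProductSpace ℝ H] where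
  u : ℚ → H →L[ℝ] H
  zero : ∀ v, u 0 v = 0
  one : ∀ v, u 1 v = v
  mul : ∀ x y v, u (x * y) v = u x (u y v)
  le : ∀ x v, ‖u x v‖ ≤ ‖v‖
  adj : ∀ x v w, inner ℝ (u x v) w = inner ℝ v (u x⁻¹ w)

theorem bd_inner_of_norm {X H : Type} [NormedAddCommGroup H] [InnerProductSpace ℝ H]
    {F G : X → H} (hF : Bd (fun x => ‖F x‖)) (hG : Bd (fun x => ‖G x‖)) :
    Bd (fun x => inner ℝ (F x) (G x)) := by
  obtain ⟨C, hC⟩ := hF.mul hG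
  exact ⟨C, fun x => (abs_real_inner_le_norm _ _).trans ((le_abs_self _).trans (hC x))⟩

theorem bd_norm_le {X H : Type} [NormedAddCommGroup H] {F : X → H} (C : ℝ)
    (h : ∀ x, ‖F x‖ ≤ C) : Bd (fun x => ‖F x‖) := ⟨C, fun x => by simpa using h x⟩

theorem bd_norm_sum {X H ι : Type} [NormedAddCommGroup H] (s : Finset ι) {F : ι → X → H}
    (h : ∀ i, Bd (fun x => ‖F i x‖)) : Bd (fun x => ‖∑ i ∈ s, F i x‖) := by
  obtain ⟨C, hC⟩ := Bd.sum s h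
  refine ⟨C, fun x => ?_⟩
  rw [abs_norm]
  exact (norm_sum_le _ _).trans ((le_abs_self _).trans (hC x))

namespace QRep
variable {H : Type} [NormedAddCommGroup H] [InnerProductSpace ℝ H] (ρ : QRep H)
variable {X Y : Type}

theorem inner_u_u (a b : ℚ) (v w : H) :
    inner ℝ (ρ.u a v) (ρ.u b w) = inner ℝ (ρ.u (a / b) v) w := by
  rw [div_eq_mul_inv, mul_comm, ρ.mul, ρ.adj b⁻¹, inv_inv]

theorem abs_inner_le (a : ℚ) (v w : H) : |inner ℝ (ρ.u a v) w| ≤ ‖v‖ * ‖w‖ :=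
  (abs_real_inner_le_norm _ _).trans
    (mul_le_mul_of_nonneg_right (ρ.le _ _) (norm_nonneg _))

theorem comm (x y : ℚ) (v : H) : ρ.u x (ρ.u y v) = ρ.u y (ρ.u x v) := by
  rw [← ρ.mul, ← ρ.mul, mul_comm]

theorem bd (r : X → ℚ) (v w : H) : Bd (fun x => inner ℝ (ρ.u (r x) v) w) :=
  ⟨‖v‖ * ‖w‖, fun x => ρ.abs_inner_le _ _ _⟩

theorem bdn (r : X → ℚ) (v : H) : Bd (fun x => ‖ρ.u (r x) v‖) :=
  bd_norm_le ‖v‖ fun x => ρ.le _ _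

theorem bd2 (r s : X → ℚ) (v w : H) : Bd (fun x => inner ℝ (ρ.u (r x) v) (ρ.u (s x) w)) :=
  bd_inner_of_norm (ρ.bdn _ _) (ρ.bdn _ _)

variable [CompleteSpace H]

noncomputable def opAux (μ : Mean X) (r : X → ℚ) (v : H) : StrongDual ℝ H :=
  LinearMap.mkContinuous
    { toFun := fun w => μ.E (fun x => inner ℝ (ρ.u (r x) v) w)
      map_add' := fun w w' => by
        simp only [inner_add_right]
        exact μ.add _ _ (ρ.bd _ _ _) (ρ.bd _ _ _)
      map_smul' := fun c w => by
        simp only [inner_smul_right]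
        exact μ.smul _ _ (ρ.bd _ _ _) } ‖v‖
    (fun w => μ.abs_le fun x => ρ.abs_inner_le _ _ _)

noncomputable def op (μ : Mean X) (r : X → ℚ) : H →L[ℝ] H :=
  LinearMap.mkContinuous
    { toFun := fun v => (InnerProductSpace.toDual ℝ H).symm (ρ.opAux μ r v)
      map_add' := fun v v' => by
        refine ext_inner_right ℝ fun w => ?_
        simp only [inner_add_left, InnerProductSpace.toDual_symm_apply]
        simp only [opAux, LinearMap.mkContinuous_apply, LinearMap.coe_mk, AddHom.coe_mk, map_add,
          inner_add_left]
        exact μ.add _ _ (ρ.bd _ _ _) (ρ.bd _ _ _)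
      map_smul' := fun c v => by
        refine ext_inner_right ℝ fun w => ?_
        simp only [inner_smul_left, InnerProductSpace.toDual_symm_apply]
        simp only [opAux, LinearMap.mkContinuous_apply, LinearMap.coe_mk, AddHom.coe_mk, map_smul,
          RingHom.id_apply, inner_smul_left, InnerProductSpace.toDual_symm_apply]
        exact μ.smul _ _ (ρ.bd _ _ _) } 1
    (fun v => by
      simp only [LinearMap.coe_mk, AddHom.coe_mk, LinearIsometryEquiv.norm_map, one_mul]
      exact LinearMap.mkContinuous_norm_le _ (norm_nonneg _) _)

theorem op_inner (μ : Mean X) (r : X → ℚ) (v w : H) :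
    inner ℝ (ρ.op μ r v) w = μ.E (fun x => inner ℝ (ρ.u (r x) v) w) := by
  simp only [op, LinearMap.mkContinuous_apply, LinearMap.coe_mk, AddHom.coe_mk,
    InnerProductSpace.toDual_symm_apply, opAux]

theorem op_le (μ : Mean X) (r : X → ℚ) (v : H) : ‖ρ.op μ r v‖ ≤ ‖v‖ := by
  have h : ‖ρ.op μ r‖ ≤ 1 := LinearMap.mkContinuous_norm_le _ zero_le_one _
  simpa using (ρ.op μ r).le_of_opNorm_le h v

theorem op_inner_right (μ : Mean X) (r : X → ℚ) (v w : H) :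
    inner ℝ v (ρ.op μ r w) = μ.E (fun x => inner ℝ v (ρ.u (r x) w)) := by
  rw [real_inner_comm, op_inner]
  simp only [real_inner_comm]

theorem op_adj (μ : Mean X) (r : X → ℚ) (v w : H) :
    inner ℝ (ρ.op μ r v) w = inner ℝ v (ρ.op μ (fun x => (r x)⁻¹) w) := by
  rw [op_inner, op_inner_right]
  simp only [ρ.adj]

theorem op_adjoint (μ : Mean X) (r : X → ℚ) :
    ContinuousLinearMap.adjoint (ρ.op μ r) = ρ.op μ (fun x => (r x)⁻¹) := by
  symm
  rw [ContinuousLinearMap.eq_adjoint_iff]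
  intro v w
  rw [op_adj]; simp

theorem op_ext (μ : Mean X) (ν : Mean Y) (r : X → ℚ) (s : Y → ℚ) (v v' : H)
    (h : ∀ w, μ.E (fun x => inner ℝ (ρ.u (r x) v) w) = ν.E (fun x => inner ℝ (ρ.u (s x) v') w)) :
    ρ.op μ r v = ρ.op ν s v' :=
  ext_inner_right ℝ fun w => by rw [op_inner, op_inner, h]

theorem op_u (μ : Mean X) (r : X → ℚ) (x : ℚ) (v : H) :
    ρ.op μ r (ρ.u x v) = ρ.op μ (fun y => x * r y) v :=
  ρ.op_ext _ _ _ _ _ _ fun w => by simp only [ρ.mul, ρ.comm x]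

theorem u_op (μ : Mean X) (r : X → ℚ) (x : ℚ) (v : H) :
    ρ.u x (ρ.op μ r v) = ρ.op μ (fun y => x * r y) v :=
  ext_inner_right ℝ fun w => by
    rw [ρ.adj, op_inner, op_inner]
    simp only [ρ.mul, ρ.adj x]

theorem op_comm_u (μ : Mean X) (r : X → ℚ) (x : ℚ) (v : H) :
    ρ.op μ r (ρ.u x v) = ρ.u x (ρ.op μ r v) := by rw [op_u, u_op]

theorem op_prod (μ : Mean X) (ν : Mean Y) (r : X → ℚ) (s : Y → ℚ) (v : H) :
    ρ.op (μ.prod ν) (fun p => r p.1 * s p.2) v = ρ.op μ r (ρ.op ν s v) :=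
  ext_inner_right ℝ fun w => by
    rw [op_inner, op_inner]
    change μ.E (fun x => ν.E (fun y => inner ℝ (ρ.u (r x * s y) v) w)) = _
    congr 1; ext x
    rw [u_op, op_inner]

theorem op_comm (μ : Mean X) (ν : Mean Y) (r : X → ℚ) (s : Y → ℚ) (v : H) :
    ρ.op μ r (ρ.op ν s v) = ρ.op ν s (ρ.op μ r v) := by
  refine ext_inner_right ℝ fun w => ?_
  rw [op_inner, op_adj ρ ν, op_inner]
  congr 1; ext x
  rw [← op_comm_u, op_adj]

theorem op_normsq (μ : Mean X) (r : X → ℚ) (v : H) :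
    ‖ρ.op μ r v‖ ^ 2 = (μ.prod μ).E (fun p => inner ℝ (ρ.u (r p.1 / r p.2) v) v) := by
  rw [← real_inner_self_eq_norm_sq, op_inner]
  change _ = μ.E (fun x => μ.E (fun y => inner ℝ (ρ.u (r x / r y) v) v))
  congr 1; ext x
  rw [op_inner_right]
  simp only [ρ.inner_u_u]

/-- norm bound for a weak mean -/
theorem normsq_le_of_weak (μ : Mean X) {F : X → H} (hF : Bd (fun x => ‖F x‖)) (g : H)
    (h : ∀ w, inner ℝ g w = μ.E (fun x => inner ℝ (F x) w)) :
    ‖g‖ ^ 2 ≤ μ.E (fun x => ‖F x‖ ^ 2) := by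
  have h1 := h g
  rw [real_inner_self_eq_norm_sq] at h1
  have hb : Bd (fun x => inner ℝ (F x) g) := bd_inner_of_norm hF (Bd.const _)
  have h2 := μ.mono (fun x => 2 * inner ℝ (F x) g) (fun x => ‖F x‖ ^ 2 + ‖g‖ ^ 2)
    ((Bd.const 2).mul hb) ((hF.pow 2).add (Bd.const _)) (fun x => by
      have := sq_nonneg ‖F x - g‖
      rw [norm_sub_sq_real] at this
      linarith [sq_nonneg ‖F x - g‖])
  rw [μ.smul _ _ hb, μ.add _ _ (hF.pow 2) (Bd.const _), μ.const] at h2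
  linarith

theorem op_aff {β : Mean ℚ} (hb : β.Aff) (r : ℚ → ℚ) (a b : ℚ) (ha : a ≠ 0) :
    ρ.op β (fun n => r (a * n + b)) = ρ.op β r := by
  ext1 v
  exact ρ.op_ext _ _ _ _ _ _ fun w => hb a b (fun n => inner ℝ (ρ.u (r n) v) w) ha (ρ.bd _ _ _)

theorem op_congr {β : Mean ℚ} (hb : β.Aff) (S : Finset ℚ) {r s : ℚ → ℚ}
    (h : ∀ n, n ∉ S → r n = s n) : ρ.op β r = ρ.op β s := by
  ext1 v
  exact ρ.op_ext _ _ _ _ _ _ fun w => hb.congr S (ρ.bd _ _ _) (ρ.bd _ _ _) fun n hn => by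
    rw [h n hn]

noncomputable def V (β : Mean ℚ) : H →L[ℝ] H := ρ.op β (fun n => (n + 1) / n)

theorem op_eq_V {β : Mean ℚ} (hb : β.Aff) {b b' : ℚ} (hbb : b ≠ b') :
    ρ.op β (fun n => (n + b) / (n + b')) = ρ.V β := by
  rw [← ρ.op_aff hb _ (b - b') (-b') (sub_ne_zero.2 hbb), V]
  congr 1; ext n
  rw [← mul_div_mul_left (n + 1) n (sub_ne_zero.2 hbb)]
  congr 1 <;> ring

theorem V_adj {β : Mean ℚ} (hb : β.Aff) (v w : H) :
    inner ℝ (ρ.V β v) w = inner ℝ v (ρ.V β w) := by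
  rw [V, op_adj]
  congr 2
  have := ρ.op_eq_V hb (b := 0) (b' := 1) zero_ne_one
  simp only [add_zero] at this
  simp only [inv_div, this, V]

theorem V_nonneg {β : Mean ℚ} (hb : β.Aff) (v : H) : 0 ≤ inner ℝ (ρ.V β v) v := by
  have key : ∀ m : ℕ, 0 ≤ (m:ℝ) * ‖v‖ ^ 2 + (m * m - m) * inner ℝ (ρ.V β v) v := by
    intro m
    have h0 : 0 ≤ β.E (fun n => ‖∑ i ∈ Finset.range m, ρ.u (n + i) v‖ ^ 2) :=
      β.const_le ((bd_norm_sum _ fun i => ρ.bdn _ _).pow 2) fun n => by positivity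
    simp only [← real_inner_self_eq_norm_sq, sum_inner, inner_sum, ρ.inner_u_u] at h0
    rw [β.sum _ fun i => Bd.sum _ fun j => ρ.bd _ _ _] at h0
    have h1 : ∀ i ∈ Finset.range m, β.E (fun n => ∑ j ∈ Finset.range m,
        inner ℝ (ρ.u ((n + (j:ℚ)) / (n + (i:ℚ))) v) v) ≤ ‖v‖ ^ 2 + (m - 1) * inner ℝ (ρ.V β v) v := by
      intro i hi
      rw [β.sum _ fun j => ρ.bd _ _ _, ← Finset.add_sum_erase _ _ hi]
      apply add_le_add
      · apply β.le_const (ρ.bd _ _ _)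
        intro n
        have := (le_abs_self _).trans (ρ.abs_inner_le ((n + (i:ℚ)) / (n + (i:ℚ))) v v)
        rw [sq]; exact this
      · rw [Finset.sum_congr rfl (g := fun _ => inner ℝ (ρ.V β v) v)]
        · simp only [Finset.sum_const, Finset.card_erase_of_mem hi, Finset.card_range, nsmul_eq_mul]
          rw [Nat.cast_sub (by have := Finset.mem_range.1 hi; omega)]
          simp
        · intro j hj
          have hne : (j:ℚ) ≠ i := by
            have := Finset.ne_of_mem_erase hj
            exact_mod_cast this
          rw [← ρ.op_eq_V hb hne, op_inner]
    have h2 := h0.trans (Finset.sum_le_sum h1)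
    simp only [Finset.sum_const, Finset.card_range, nsmul_eq_mul] at h2
    linarith
  by_contra hneg
  push Not at hneg
  set c := inner ℝ (ρ.V β v) v
  obtain ⟨N, hN⟩ := exists_nat_gt (‖v‖ ^ 2 / (-c))
  rw [div_lt_iff₀ (by linarith)] at hN
  have := key (N + 1)
  push_cast at this
  nlinarith

theorem V_star {α β : Mean ℚ} (ha : α.Aff) (hb : β.Aff) (v : H) :
    ρ.V (Mean.star α β) v = ρ.V α (ρ.V β v) := by
  rw [V, V, V, ← op_prod]
  refine ρ.op_ext _ _ _ _ _ _ fun w => ?_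
  rw [Mean.star_E]
  change _ = α.E (fun x => β.E (fun y => inner ℝ (ρ.u ((x + 1) / x * ((y + 1) / y)) v) w))
  refine ha.congr {0, -1} ?_ ?_ fun x hx => ?_
  · exact Mean.bd_inner' β (ρ.bd (fun p : ℚ × ℚ => _) _ _)
  · exact Mean.bd_inner' β (ρ.bd (fun p : ℚ × ℚ => _) _ _)
  simp only [Finset.mem_insert, Finset.mem_singleton, not_or] at hx
  obtain ⟨hx0, hx1⟩ := hx
  have hx1' : x + 1 ≠ 0 := fun h => hx1 (by linarith)
  rw [← hb (1 / (x * (x + 1))) (1 / x) (fun y => inner ℝ (ρ.u ((x - 1 / y + 1) / (x - 1 / y)) v) w)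
    (by positivity) (ρ.bd _ _ _)]
  refine hb.congr {-x-1, 0} (ρ.bd _ _ _) (ρ.bd _ _ _) fun y hy => ?_
  simp only [Finset.mem_insert, Finset.mem_singleton, not_or] at hy
  have hy' : y + x + 1 ≠ 0 := fun h => hy.1 (by linarith)
  have hy0 := hy.2
  congr 3
  have e1 : 1 / (1 / (x * (x + 1)) * y + 1 / x) = x * (x + 1) / (y + x + 1) := by
    have : 1 / (x * (x + 1)) * y + 1 / x = (y + x + 1) / (x * (x + 1)) := by
      field_simp; ring
    rw [this, one_div_div]
  rw [e1]
  have e2 : x - x * (x + 1) / (y + x + 1) = x * y / (y + x + 1) := by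
    field_simp; ring
  rw [e2]
  field_simp
  ring
end QRep


theorem Mean.Aff.shift2 {β : Mean ℚ} (hb : β.Aff) (c : ℚ) {F : ℚ × ℚ → ℝ} (hF : Bd F) :
    (β.prod β).E (fun p => F (p.1 + c, p.2 + c)) = (β.prod β).E F := by
  change β.E (fun x => β.E (fun y => F (x + c, y + c))) = β.E (fun x => β.E (fun y => F (x, y)))
  rw [← hb 1 c (fun x => β.E (fun y => F (x, y))) one_ne_zero (Mean.bd_inner β hF)]
  congr 1; ext x
  have := hb 1 c (fun y => F (1 * x + c, y)) one_ne_zero (hF.comp' _)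
  simpa only [one_mul] using this

namespace QRep
variable {H : Type} [NormedAddCommGroup H] [InnerProductSpace ℝ H] (ρ : QRep H)
variable {X Y : Type}

theorem abs_uu_le {v : H} (hv : ‖v‖ ≤ 1) (a b : ℚ) : |inner ℝ (ρ.u a v) (ρ.u b v)| ≤ 1 := by
  refine (abs_real_inner_le_norm _ _).trans ?_
  have h1 := (ρ.le a v).trans hv
  have h2 := (ρ.le b v).trans hv
  nlinarith [norm_nonneg (ρ.u a v), norm_nonneg (ρ.u b v)]

variable [CompleteSpace H]

/-- the quotient `D(p)/D(q)`, `D(p) = p/(p+xk)` -/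
def Cq (k x p q : ℚ) : ℚ := (p / (p + x * k)) / (q / (q + x * k))

theorem core1 {β : Mean ℚ} (hb : β.Aff) {k : ℚ} (hk : k ≠ 0) {v : H} (hv : ‖v‖ ≤ 1)
    (x : ℕ → ℚ) (hx : Function.Injective x) (m : ℕ) :
    (β.prod β).E (fun p => ‖∑ i ∈ Finset.range m, ρ.u (Cq k (x i) p.1 p.2) v‖ ^ 2)
      ≤ m + m ^ 2 * ‖ρ.V β v‖ ^ 2 := by
  simp only [← real_inner_self_eq_norm_sq, sum_inner, inner_sum]
  rw [Mean.sum _ _ fun i => Bd.sum _ fun j => ρ.bd2 _ _ _ _]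
  have h1 : ∀ i ∈ Finset.range m, (β.prod β).E (fun p => ∑ j ∈ Finset.range m,
      inner ℝ (ρ.u (Cq k (x j) p.1 p.2) v) (ρ.u (Cq k (x i) p.1 p.2) v))
      ≤ ∑ j ∈ Finset.range m, (‖ρ.V β v‖ ^ 2 + if i = j then 1 else 0) := by
    intro i hi
    rw [Mean.sum _ _ fun j => ρ.bd2 _ _ _ _]
    refine Finset.sum_le_sum fun j hj => ?_
    by_cases hij : i = j
    · rw [if_pos hij]
      refine (Mean.le_const _ (ρ.bd2 _ _ _ _) (C := 1) fun p =>
        (le_abs_self _).trans (ρ.abs_uu_le hv _ _)).trans ?_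
      linarith [sq_nonneg ‖ρ.V β v‖]
    · rw [if_neg hij, add_zero]
      have e : ρ.V β = ρ.op β (fun n => (n / (n + x j * k)) / (n / (n + x i * k))) := by
        rw [← ρ.op_eq_V hb (b := x i * k) (b' := x j * k)]
        · refine ρ.op_congr hb {0} fun n hn => ?_
          have hn : n ≠ 0 := by simpa using hn
          rw [div_div_div_eq, mul_comm (n + x j * k) n, mul_div_mul_left _ _ hn]
        · intro h
          exact hij (hx (mul_right_cancel₀ hk h))
      rw [e, op_normsq]
      apply le_of_eq
      congr 1; ext p
      rw [ρ.inner_u_u]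
      simp only [Cq]
      congr 3
      rw [div_div_div_comm]
  refine (Finset.sum_le_sum h1).trans (le_of_eq ?_)
  simp only [Finset.sum_add_distrib, Finset.sum_ite_eq, Finset.sum_const, Finset.card_range,
    nsmul_eq_mul]
  rw [Finset.sum_congr rfl (g := fun _ => (1:ℝ))]
  · simp; ring
  · intro i hi; rw [if_pos hi]

theorem core2 {α β : Mean ℚ} (ha : α.Aff) (hb : β.Aff) {k : ℚ} (h : ℚ) (hk : k ≠ 0) {v : H}
    (hv : ‖v‖ ≤ 1) (x : ℕ → ℚ) (hx : Function.Injective x) (m : ℕ) :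
    α.E (fun z => (β.prod β).E (fun p => ‖∑ i ∈ Finset.range m,
      ρ.u (Cq k (x i) (p.1 + x i * (z + h)) (p.2 + x i * (z + h))) v‖ ^ 2))
      ≤ 3 * m + m ^ 2 * ‖ρ.V β v‖ ^ 2 := by
  set β₂ := β.prod β
  have hbd : ∀ (r s : ℚ × (ℚ × ℚ) → ℚ), Bd (fun z : ℚ => β₂.E (fun p =>
      inner ℝ (ρ.u (r (z, p)) v) (ρ.u (s (z, p)) v))) := fun r s =>
    Mean.bd_inner β₂ (F := fun q => inner ℝ (ρ.u (r q) v) (ρ.u (s q) v)) (ρ.bd2 _ _ _ _)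
  -- the term comparison
  have hT : ∀ i j : ℕ, α.E (fun z => β₂.E (fun p =>
      inner ℝ (ρ.u (Cq k (x j) (p.1 + x j * (z + h)) (p.2 + x j * (z + h))) v)
        (ρ.u (Cq k (x i) (p.1 + x i * (z + h)) (p.2 + x i * (z + h))) v)))
      ≤ α.E (fun z => β₂.E (fun p => inner ℝ (ρ.u (Cq k (x j) (p.1 + z) (p.2 + z)) v)
        (ρ.u (Cq k (x i) p.1 p.2) v))) + if i = j then 2 else 0 := by
    intro i j
    have hle : ∀ (r s : ℚ × (ℚ × ℚ) → ℚ), |α.E (fun z : ℚ => β₂.E (fun p =>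
      inner ℝ (ρ.u (r (z, p)) v) (ρ.u (s (z, p)) v)))| ≤ 1 := fun r s =>
        α.abs_le fun z => β₂.abs_le fun p => ρ.abs_uu_le hv _ _
    by_cases hij : i = j
    · rw [if_pos hij]
      have h1 := hle (fun q => Cq k (x j) (q.2.1 + x j * (q.1 + h)) (q.2.2 + x j * (q.1 + h)))
        (fun q => Cq k (x i) (q.2.1 + x i * (q.1 + h)) (q.2.2 + x i * (q.1 + h)))
      have h2 := hle (fun q => Cq k (x j) (q.2.1 + q.1) (q.2.2 + q.1))
        (fun q => Cq k (x i) q.2.1 q.2.2)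
      simp only [abs_le] at h1 h2
      linarith [h1.2, h2.1]
    · rw [if_neg hij, add_zero]
      have hne : x j - x i ≠ 0 := sub_ne_zero.2 fun e => hij (hx e.symm)
      apply le_of_eq
      rw [← ha (x j - x i) ((x j - x i) * h) (fun z => β₂.E (fun p =>
        inner ℝ (ρ.u (Cq k (x j) (p.1 + z) (p.2 + z)) v) (ρ.u (Cq k (x i) p.1 p.2) v))) hne
        (hbd (fun q => Cq k (x j) (q.2.1 + q.1) (q.2.2 + q.1)) (fun q => Cq k (x i) q.2.1 q.2.2))]
      congr 1; ext z
      rw [← hb.shift2 (x i * (z + h)) (F := fun p => inner ℝ (ρ.u (Cq k (x j)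
        (p.1 + ((x j - x i) * z + (x j - x i) * h)) (p.2 + ((x j - x i) * z + (x j - x i) * h))) v)
        (ρ.u (Cq k (x i) p.1 p.2) v)) (ρ.bd2 _ _ _ _)]
      congr 1; ext p
      congr 4 <;> ring
  simp only [← real_inner_self_eq_norm_sq (∑ i ∈ Finset.range m, _), sum_inner, inner_sum]
  have e1 : ∀ (r s : ℕ → ℚ × (ℚ × ℚ) → ℚ),
      α.E (fun z => β₂.E (fun p => ∑ i ∈ Finset.range m, ∑ j ∈ Finset.range m,
      inner ℝ (ρ.u (r j (z, p)) v) (ρ.u (s i (z, p)) v))) = ∑ i ∈ Finset.range m,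
      ∑ j ∈ Finset.range m, α.E (fun z => β₂.E (fun p =>
        inner ℝ (ρ.u (r j (z, p)) v) (ρ.u (s i (z, p)) v))) := by
    intro r s
    have : ∀ z, β₂.E (fun p => ∑ i ∈ Finset.range m, ∑ j ∈ Finset.range m,
      inner ℝ (ρ.u (r j (z, p)) v) (ρ.u (s i (z, p)) v)) = ∑ i ∈ Finset.range m,
        ∑ j ∈ Finset.range m, β₂.E (fun p =>
          inner ℝ (ρ.u (r j (z, p)) v) (ρ.u (s i (z, p)) v)) := by
      intro z
      rw [Mean.sum _ _ fun i => Bd.sum _ fun j => ρ.bd2 _ _ _ _]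
      refine Finset.sum_congr rfl fun i _ => ?_
      rw [Mean.sum _ _ fun j => ρ.bd2 _ _ _ _]
    simp only [this]
    rw [Mean.sum _ _ fun i => Bd.sum _ fun j => hbd _ _]
    refine Finset.sum_congr rfl fun i _ => ?_
    rw [Mean.sum _ _ fun j => hbd _ _]
  rw [e1 (fun j q => Cq k (x j) (q.2.1 + x j * (q.1 + h)) (q.2.2 + x j * (q.1 + h)))
    (fun i q => Cq k (x i) (q.2.1 + x i * (q.1 + h)) (q.2.2 + x i * (q.1 + h)))]
  refine (Finset.sum_le_sum fun i _ => Finset.sum_le_sum fun j _ => hT i j).trans ?_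
  simp only [Finset.sum_add_distrib]
  rw [← e1 (fun j q => Cq k (x j) (q.2.1 + q.1) (q.2.2 + q.1)) (fun i q => Cq k (x i) q.2.1 q.2.2)]
  have e2 : ∑ i ∈ Finset.range m, ∑ j ∈ Finset.range m, (if i = j then (2:ℝ) else 0) = 2 * m := by
    simp only [Finset.sum_ite_eq]
    rw [Finset.sum_congr rfl (g := fun _ => (2:ℝ)) (fun i hi => if_pos hi)]
    simp; ring
  rw [e2]
  have e3 : α.E (fun z => β₂.E (fun p => ∑ i ∈ Finset.range m, ∑ j ∈ Finset.range m,
      inner ℝ (ρ.u (Cq k (x j) (p.1 + z) (p.2 + z)) v) (ρ.u (Cq k (x i) p.1 p.2) v)))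
      ≤ m + m ^ 2 * ‖ρ.V β v‖ ^ 2 := by
    refine α.le_const (Mean.bd_inner β₂ (F := fun q : ℚ × (ℚ × ℚ) => ∑ i ∈ Finset.range m,
      ∑ j ∈ Finset.range m, inner ℝ (ρ.u (Cq k (x j) (q.2.1 + q.1) (q.2.2 + q.1)) v)
        (ρ.u (Cq k (x i) q.2.1 q.2.2) v)) (Bd.sum _ fun i => Bd.sum _ fun j => ρ.bd2 _ _ _ _)) ?_
    intro z
    refine le_trans ?_ (ρ.core1 hb hk hv x hx m)
    set A : ℚ × ℚ → H := fun p => ∑ i ∈ Finset.range m, ρ.u (Cq k (x i) p.1 p.2) v with hA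
    have hAb : Bd (fun p => ‖A p‖) := bd_norm_sum _ fun i => ρ.bdn _ _
    have h1 := β₂.mono (fun p => ∑ i ∈ Finset.range m, ∑ j ∈ Finset.range m,
      inner ℝ (ρ.u (Cq k (x j) (p.1 + z) (p.2 + z)) v) (ρ.u (Cq k (x i) p.1 p.2) v))
      (fun p => (1/2) * (‖A (p.1 + z, p.2 + z)‖ ^ 2 + ‖A p‖ ^ 2))
      (Bd.sum _ fun i => Bd.sum _ fun j => ρ.bd2 _ _ _ _)
      ((Bd.const _).mul (((hAb.comp' (fun p : ℚ × ℚ => (p.1 + z, p.2 + z))).pow 2).add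
        (hAb.pow 2))) (fun p => by
        have : ∑ i ∈ Finset.range m, ∑ j ∈ Finset.range m,
          inner ℝ (ρ.u (Cq k (x j) (p.1 + z) (p.2 + z)) v) (ρ.u (Cq k (x i) p.1 p.2) v)
          = inner ℝ (A (p.1 + z, p.2 + z)) (A p) := by
            simp only [hA, sum_inner, inner_sum]
        rw [this]
        have h2 := sq_nonneg ‖A (p.1 + z, p.2 + z) - A p‖
        rw [norm_sub_sq_real] at h2
        linarith)
    refine h1.trans (le_of_eq ?_)
    rw [β₂.smul _ _ (((hAb.comp' (fun p : ℚ × ℚ => (p.1 + z, p.2 + z))).pow 2).add (hAb.pow 2)),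
      β₂.add _ _ ((hAb.comp' (fun p : ℚ × ℚ => (p.1 + z, p.2 + z))).pow 2) (hAb.pow 2),
      hb.shift2 z (F := fun p => ‖A p‖ ^ 2) (hAb.pow 2)]
    change _ = β₂.E (fun p => ‖A p‖ ^ 2)
    ring
  linarith
end QRep


namespace QRep
variable {H : Type} [NormedAddCommGroup H] [InnerProductSpace ℝ H] (ρ : QRep H)
variable {X Y : Type} [CompleteSpace H]

/-- the inner operators -/
noncomputable def G (β : Mean ℚ) (ε s s' : ℚ) : H →L[ℝ] H :=
  ρ.op β (fun n => ((n + s) * (n + ε / s)) / ((n + s') * (n + ε / s')))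

def Rw (ε s n : ℚ) : ℚ := s / (s ^ 2 - ε) * ((n + s) * (n + ε / s)) / (n ^ 2 - ε)

noncomputable def J (α β : Mean ℚ) (ε : ℚ) : H →L[ℝ] H :=
  ρ.op (α.prod β) (fun p => Rw ε p.1 p.2)

theorem bdG (β : Mean ℚ) (ε : ℚ) (s s' : X → ℚ) (v : H) :
    Bd (fun z => ‖ρ.G β ε (s z) (s' z) v‖) := bd_norm_le ‖v‖ fun z => ρ.op_le _ _ _

theorem G_dil {β : Mean ℚ} (hb : β.Aff) (ε : ℚ) {q : ℚ} (hq : q ≠ 0) (a b : ℚ) :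
    ρ.G β ε (q * a) (q * b) = ρ.op β (fun n => ((n + q ^ 2 * a) / (n + q ^ 2 * b)) *
      ((n + ε / a) / (n + ε / b))) := by
  rw [G, ← ρ.op_aff hb _ (1 / q) 0 (by positivity)]
  congr 1; ext n
  have e1 : ∀ a : ℚ, 1 / q * n + 0 + q * a = (n + q ^ 2 * a) / q := fun a => by
    field_simp
    ring
  have e2 : ∀ a : ℚ, 1 / q * n + 0 + ε / (q * a) = (n + ε / a) / q := fun a => by
    rw [mul_comm q a, ← div_div]
    ring
  rw [e1, e1, e2, e2, div_mul_div_comm, div_mul_div_comm, div_mul_div_comm,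
    div_div_div_cancel_right₀ (by positivity)]

theorem core3 {α β : Mean ℚ} (ha : α.Aff) (hb : β.Aff) (ε : ℚ) {h h' : ℚ} (hh : h ≠ h') {v : H}
    (hv : ‖v‖ ≤ 1) (m : ℕ) :
    α.E (fun z => ∑ i ∈ Finset.range m,
      ‖ρ.G β ε (((i:ℚ) + 1) * (z + h)) (((i:ℚ) + 1) * (z + h')) v‖) ^ 4
      ≤ m ^ 2 * (3 * m + m ^ 2 * ‖ρ.V β v‖ ^ 2) := by
  set x : ℕ → ℚ := fun i => ((i:ℚ) + 1) ^ 2 with hxdef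
  have hx : Function.Injective x := by
    intro i j hij
    simp only [hxdef] at hij
    have := (sq_eq_sq₀ (by positivity) (by positivity)).1 hij
    exact_mod_cast add_right_cancel this
  have hk : h' - h ≠ 0 := sub_ne_zero.2 hh.symm
  have hc := ρ.core2 ha hb h hk hv x hx m
  set β₂ := β.prod β
  set g : ℕ → ℚ → ℝ := fun i z => ‖ρ.G β ε (((i:ℚ) + 1) * (z + h)) (((i:ℚ) + 1) * (z + h')) v‖
    with hg
  have hgb : ∀ i, Bd (g i) := fun i => ρ.bdG _ _ _ _ _
  set A : ℚ → ℚ × ℚ → H := fun z p => ∑ i ∈ Finset.range m,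
      ρ.u (Cq (h' - h) (x i) (p.1 + x i * (z + h)) (p.2 + x i * (z + h))) v with hA
  have hAb : Bd (fun q : ℚ × (ℚ × ℚ) => ‖A q.1 q.2‖) := bd_norm_sum _ fun i => ρ.bdn _ _
  -- pointwise bound
  have hpt : ∀ z, (∑ i ∈ Finset.range m, g i z) ^ 4 ≤ m ^ 2 * β₂.E (fun p => ‖A z p‖ ^ 2) := by
    intro z
    have hAz : Bd (fun p => ‖A z p‖) := hAb.comp' (fun p => (z, p))
    set c : ℚ → ℚ := fun n => (n + ε / (z + h)) / (n + ε / (z + h'))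
    have h1 : ∑ i ∈ Finset.range m, g i z ^ 2 = β₂.E (fun p => inner ℝ (A z p)
        (ρ.u (c p.2 / c p.1) v)) := by
      simp only [hA, sum_inner]
      rw [β₂.sum _ fun i => ρ.bd2 _ _ _ _]
      refine Finset.sum_congr rfl fun i _ => ?_
      simp only [hg]
      rw [ρ.G_dil hb ε (by positivity), op_normsq]
      congr 1; ext p
      rw [ρ.inner_u_u]
      congr 3
      simp only [Cq]
      have e : ∀ n : ℚ, n + x i * (z + h) + x i * (h' - h) = n + x i * (z + h') := fun n => by ring
      rw [e, e, div_div_eq_mul_div _ (c p.2) (c p.1), mul_div_mul_comm, mul_div_assoc]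
    have h2 : ∑ i ∈ Finset.range m, g i z ^ 2 ≤ β₂.E (fun p => ‖A z p‖) := by
      rw [h1]
      refine β₂.mono _ _ (bd_inner_of_norm hAz (ρ.bdn _ _)) hAz fun p => ?_
      refine (real_inner_le_norm _ _).trans ?_
      exact mul_le_of_le_one_right (norm_nonneg _) ((ρ.le _ _).trans hv)
    have h3 : (∑ i ∈ Finset.range m, g i z ^ 2) ^ 2 ≤ β₂.E (fun p => ‖A z p‖ ^ 2) :=
      (pow_le_pow_left₀ (Finset.sum_nonneg fun i _ => sq_nonneg _) h2 2).trans (β₂.sq_le hAz)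
    have h4 : (∑ i ∈ Finset.range m, g i z) ^ 2 ≤ m * ∑ i ∈ Finset.range m, g i z ^ 2 := by
      have := sq_sum_le_card_mul_sum_sq (s := Finset.range m) (f := fun i => g i z)
      simpa using this
    calc (∑ i ∈ Finset.range m, g i z) ^ 4 = ((∑ i ∈ Finset.range m, g i z) ^ 2) ^ 2 := by ring
      _ ≤ (m * ∑ i ∈ Finset.range m, g i z ^ 2) ^ 2 := pow_le_pow_left₀ (sq_nonneg _) h4 2
      _ = m ^ 2 * (∑ i ∈ Finset.range m, g i z ^ 2) ^ 2 := by ring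
      _ ≤ _ := by gcongr
  have hBb : Bd (fun z => ∑ i ∈ Finset.range m, g i z) := Bd.sum _ hgb
  have hAm : Bd (fun z => β₂.E (fun p => ‖A z p‖ ^ 2)) :=
    Mean.bd_inner β₂ (F := fun q : ℚ × (ℚ × ℚ) => ‖A q.1 q.2‖ ^ 2) (hAb.pow 2)
  calc α.E (fun z => ∑ i ∈ Finset.range m, g i z) ^ 4
      = (α.E (fun z => ∑ i ∈ Finset.range m, g i z) ^ 2) ^ 2 := by ring
    _ ≤ (α.E (fun z => (∑ i ∈ Finset.range m, g i z) ^ 2)) ^ 2 :=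
        pow_le_pow_left₀ (sq_nonneg _) (α.sq_le hBb) 2
    _ ≤ α.E (fun z => ((∑ i ∈ Finset.range m, g i z) ^ 2) ^ 2) := α.sq_le (hBb.pow 2)
    _ ≤ α.E (fun z => m ^ 2 * β₂.E (fun p => ‖A z p‖ ^ 2)) :=
        α.mono _ _ ((hBb.pow 2).pow 2) ((Bd.const _).mul hAm) fun z => by
          rw [← pow_mul]; exact hpt z
    _ = m ^ 2 * α.E (fun z => β₂.E (fun p => ‖A z p‖ ^ 2)) := α.smul _ _ hAm
    _ ≤ _ := by gcongr

theorem core4 {α β : Mean ℚ} (ha : α.Aff) (ε : ℚ) {q : ℚ} (hq : q ≠ 0) {v : H}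
    (hv : ‖v‖ ≤ 1) (N : ℕ) :
    N ^ 2 * ‖ρ.J α β ε v‖ ^ 2 ≤ ∑ i ∈ Finset.range N, ∑ j ∈ Finset.range N,
      if i = j then 1 else α.E (fun z => ‖ρ.G β ε (q * (z + j)) (q * (z + i)) v‖) := by
  set F : ℚ × ℚ → H := fun p => ∑ i ∈ Finset.range N, ρ.u (Rw ε (q * (p.1 + i)) p.2) v with hF
  have hw : ∀ w, inner ℝ ((N:ℝ) • ρ.J α β ε v) w = (α.prod β).E (fun p => inner ℝ (F p) w) := by
    intro w
    simp only [hF, sum_inner]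
    rw [Mean.sum _ _ fun i => ρ.bd _ _ _, inner_smul_left, J, op_inner]
    rw [Finset.sum_congr rfl (g := fun _ => (α.prod β).E
      (fun p => inner ℝ (ρ.u (Rw ε p.1 p.2) v) w))]
    · simp
    · intro i _
      change α.E (fun z => β.E (fun n => inner ℝ (ρ.u (Rw ε (q * (z + i)) n) v) w))
        = α.E (fun z => β.E (fun n => inner ℝ (ρ.u (Rw ε z n) v) w))
      rw [← ha q (q * i) (fun z => β.E (fun n => inner ℝ (ρ.u (Rw ε z n) v) w)) hq
        (Mean.bd_inner' β (ρ.bd (fun p : ℚ × ℚ => Rw ε p.1 p.2) _ _))]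
      simp only [mul_add]
  have h1 := normsq_le_of_weak (α.prod β) (bd_norm_sum _ fun i => ρ.bdn _ _) _ hw
  rw [norm_smul, mul_pow, Real.norm_natCast] at h1
  refine h1.trans ?_
  set P : ℕ → ℚ × ℚ → ℚ := fun i p => (q * (p.1 + i)) / ((q * (p.1 + i)) ^ 2 - ε) *
    ((p.2 + q * (p.1 + i)) * (p.2 + ε / (q * (p.1 + i)))) with hP
  have h2 : (α.prod β).E (fun p => ‖F p‖ ^ 2) ≤ (α.prod β).E (fun p =>
      ∑ i ∈ Finset.range N, ∑ j ∈ Finset.range N, inner ℝ (ρ.u (P j p) v) (ρ.u (P i p) v)) := by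
    refine Mean.mono _ _ _ ((bd_norm_sum _ fun i => ρ.bdn _ _).pow 2)
      (Bd.sum _ fun i => Bd.sum _ fun j => ρ.bd2 _ _ _ _) fun p => ?_
    have e1 : F p = ρ.u (1 / (p.2 ^ 2 - ε)) (∑ i ∈ Finset.range N, ρ.u (P i p) v) := by
      simp only [hF, map_sum, ← ρ.mul]
      refine Finset.sum_congr rfl fun i _ => ?_
      congr 2
      simp only [Rw, hP]
      rw [one_div_mul_eq_div]
    have e2 : ∑ i ∈ Finset.range N, ∑ j ∈ Finset.range N, inner ℝ (ρ.u (P j p) v) (ρ.u (P i p) v)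
        = ‖∑ i ∈ Finset.range N, ρ.u (P i p) v‖ ^ 2 := by
      simp only [← real_inner_self_eq_norm_sq, sum_inner, inner_sum]
    rw [e1, e2]
    exact pow_le_pow_left₀ (norm_nonneg _) (ρ.le _ _) 2
  refine h2.trans ?_
  rw [Mean.sum _ _ fun i => Bd.sum _ fun j => ρ.bd2 _ _ _ _]
  refine Finset.sum_le_sum fun i _ => ?_
  rw [Mean.sum _ _ fun j => ρ.bd2 _ _ _ _]
  refine Finset.sum_le_sum fun j _ => ?_
  split_ifs with hij
  · exact Mean.le_const _ (ρ.bd2 _ _ _ _) fun p => (le_abs_self _).trans (ρ.abs_uu_le hv _ _)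
  · change α.E (fun z => β.E (fun n => inner ℝ (ρ.u (P j (z, n)) v) (ρ.u (P i (z, n)) v))) ≤ _
    refine α.mono _ _ (Mean.bd_inner' β (ρ.bd2 (fun p : ℚ × ℚ => P j (p.1, p.2))
      (fun p : ℚ × ℚ => P i (p.1, p.2)) _ _)) (ρ.bdG _ _ _ _ _) fun z => ?_
    have e : β.E (fun n => inner ℝ (ρ.u (P j (z, n)) v) (ρ.u (P i (z, n)) v)) =
        inner ℝ (ρ.u (((q * (z + j)) / ((q * (z + j)) ^ 2 - ε)) /
          ((q * (z + i)) / ((q * (z + i)) ^ 2 - ε))) (ρ.G β ε (q * (z + j)) (q * (z + i)) v)) v := by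
      rw [G, u_op, op_inner]
      congr 1; ext n
      rw [ρ.inner_u_u]
      congr 3
      simp only [hP]
      rw [mul_div_mul_comm]
    rw [e]
    refine (real_inner_le_norm _ _).trans ?_
    exact (mul_le_of_le_one_right (norm_nonneg _) hv).trans (ρ.le _ _)

theorem stepA {α β : Mean ℚ} (ha : α.Aff) (hb : β.Aff) (ε : ℚ) {v : H} (hv : ‖v‖ ≤ 1) :
    ‖ρ.J α β ε v‖ ^ 8 ≤ ‖ρ.V β v‖ ^ 2 := by
  set L := ‖ρ.J α β ε v‖ with hL
  have hL0 : 0 ≤ L := norm_nonneg _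
  have key : ∀ m : ℕ, (m:ℝ) ^ 4 * L ^ 8 ≤ m ^ 2 * (3 * m + m ^ 2 * ‖ρ.V β v‖ ^ 2) := by
    intro m
    set K := Real.sqrt (Real.sqrt (m ^ 2 * (3 * m + m ^ 2 * ‖ρ.V β v‖ ^ 2))) with hK
    have hK0 : 0 ≤ K := Real.sqrt_nonneg _
    have hK4 : K ^ 4 = m ^ 2 * (3 * m + m ^ 2 * ‖ρ.V β v‖ ^ 2) := by
      rw [show K ^ 4 = (K ^ 2) ^ 2 by ring, hK, Real.sq_sqrt (Real.sqrt_nonneg _),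
        Real.sq_sqrt (by positivity)]
    have hN : ∀ N : ℕ, m * (N ^ 2 * L ^ 2) ≤ m * N + N ^ 2 * K := by
      intro N
      have h1 := Finset.sum_le_sum (s := Finset.range m) fun i _ =>
        ρ.core4 (β := β) ha ε (q := (i:ℚ) + 1) (by positivity) hv N
      rw [Finset.sum_const, Finset.card_range, nsmul_eq_mul] at h1
      refine h1.trans ?_
      rw [Finset.sum_comm]
      have h2 : ∀ i ∈ Finset.range N, ∑ l ∈ Finset.range m, (∑ j ∈ Finset.range N,
          if i = j then (1:ℝ) else α.E (fun z => ‖ρ.G β ε (((l:ℚ) + 1) * (z + j))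
            (((l:ℚ) + 1) * (z + i)) v‖)) ≤ m + N * K := by
        intro i hi
        rw [Finset.sum_comm]
        have h3 : ∀ j ∈ Finset.range N, ∑ l ∈ Finset.range m, (
          if i = j then (1:ℝ) else α.E (fun z => ‖ρ.G β ε (((l:ℚ) + 1) * (z + j))
            (((l:ℚ) + 1) * (z + i)) v‖)) ≤ (if i = j then (m:ℝ) else 0) + K := by
          intro j hj
          split_ifs with hij
          · simp [hK0]
          · rw [← α.sum _ fun l => ρ.bdG _ _ _ _ _, zero_add]
            have h4 := ρ.core3 ha hb ε (h := (j:ℚ)) (h' := (i:ℚ))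
              (by exact_mod_cast Ne.symm hij) hv m
            rw [← hK4] at h4
            exact le_of_pow_le_pow_left₀ (by norm_num) hK0 h4
        refine (Finset.sum_le_sum h3).trans (le_of_eq ?_)
        rw [Finset.sum_add_distrib, Finset.sum_ite_eq, if_pos hi]
        simp
      refine (Finset.sum_le_sum h2).trans (le_of_eq ?_)
      simp; ring
    have hfin : m * L ^ 2 ≤ K := by
      by_contra hlt
      push Not at hlt
      obtain ⟨N, hN'⟩ := exists_nat_gt ((m:ℝ) / (m * L ^ 2 - K))
      have hpos : 0 < m * L ^ 2 - K := by linarith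
      rw [div_lt_iff₀ hpos] at hN'
      have hNp : (0:ℝ) < N := by
        by_contra h
        push Not at h
        have : (0:ℝ) ≤ m := Nat.cast_nonneg m
        nlinarith
      have := hN N
      nlinarith [mul_lt_mul_of_pos_left hN' hNp]
    have := pow_le_pow_left₀ (by positivity) hfin 4
    rw [hK4] at this
    calc (m:ℝ) ^ 4 * L ^ 8 = (m * L ^ 2) ^ 4 := by ring
      _ ≤ _ := this
  by_contra hlt
  push Not at hlt
  have hpos : 0 < L ^ 8 - ‖ρ.V β v‖ ^ 2 := by linarith
  obtain ⟨m, hm⟩ := exists_nat_gt (3 / (L ^ 8 - ‖ρ.V β v‖ ^ 2))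
  have hm0 : (0:ℝ) < m := lt_trans (by positivity) hm
  rw [div_lt_iff₀ hpos] at hm
  have := key m
  have h3 : 0 < (m:ℝ) ^ 3 := by positivity
  nlinarith [mul_lt_mul_of_pos_left hm h3]
end QRep


theorem lemT {H : Type} [NormedAddCommGroup H] [InnerProductSpace ℝ H] [CompleteSpace H]
    (T S : H →L[ℝ] H) (hT : ∀ x, ‖T x‖ ≤ ‖x‖) (hadj : ∀ x y, inner ℝ (T x) y = inner ℝ x (S y))
    (hcomm : ∀ x, S (T x) = T (S x)) (W : Submodule ℝ H) (hW : IsClosed (W : Set H))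
    (hWS : ∀ z ∈ W, S (T z) ∈ W) (x : H) (hx : x ∈ W)
    (hperp : ∀ z ∈ W, S (T z) = z → inner ℝ x z = 0) :
    Tendsto (fun k : ℕ => ‖(T ^ k) x‖) atTop (nhds 0) := by
  set Q : H →L[ℝ] H := S * T with hQ
  have hQsa : ∀ a b, inner ℝ (Q a) b = inner ℝ a (Q b) := by
    intro a b
    change inner ℝ (S (T a)) b = inner ℝ a (S (T b))
    rw [← hadj, real_inner_comm, ← hadj, real_inner_comm]
  have hQk : ∀ k a b, inner ℝ ((Q ^ k) a) b = inner ℝ a ((Q ^ k) b) := by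
    intro k
    induction k with
    | zero => intro a b; simp
    | succ k ih =>
      intro a b
      rw [pow_succ, ContinuousLinearMap.mul_apply, ih, hQsa, ← ContinuousLinearMap.mul_apply,
        ← pow_succ', pow_succ]
  have hc : Commute S T := by
    ext1 z
    exact hcomm z
  have hTk : ∀ k a b, inner ℝ ((T ^ k) a) b = inner ℝ a ((S ^ k) b) := by
    intro k
    induction k with
    | zero => intro a b; simp
    | succ k ih =>
      intro a b
      rw [pow_succ, ContinuousLinearMap.mul_apply, ih, hadj, ← ContinuousLinearMap.mul_apply,
        ← pow_succ', pow_succ]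
  set c : ℕ → ℝ := fun k => ‖(T ^ k) x‖ ^ 2 with hcdef
  have hcQ : ∀ a b : ℕ, inner ℝ ((Q ^ a) x) ((Q ^ b) x) = c (a + b) := by
    intro a b
    rw [hQk, ← ContinuousLinearMap.mul_apply, ← pow_add, hQ, hc.mul_pow,
      ContinuousLinearMap.mul_apply, ← hTk, real_inner_self_eq_norm_sq]
  have hcanti : Antitone c := antitone_nat_of_succ_le fun k => by
    simp only [hcdef, pow_succ' T, ContinuousLinearMap.mul_apply]
    exact pow_le_pow_left₀ (norm_nonneg _) (hT _) 2
  have hcbdd : BddBelow (Set.range c) := ⟨0, by rintro _ ⟨k, rfl⟩; exact sq_nonneg _⟩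
  have hclim := tendsto_atTop_ciInf hcanti hcbdd
  set l := ⨅ i, c i
  have hlc : ∀ k, l ≤ c k := fun k => ciInf_le hcbdd k
  have hcau : CauchySeq (fun k => (Q ^ k) x) := by
    rw [Metric.cauchySeq_iff]
    intro e he
    have hev : ∀ᶠ k in atTop, c k < l + e ^ 2 / 2 := hclim.eventually_lt_const (by
      have : 0 < e ^ 2 := by positivity
      linarith)
    obtain ⟨N, hN⟩ := eventually_atTop.1 hev
    refine ⟨N, fun a ha b hb => ?_⟩
    rw [dist_eq_norm]
    have h1 : ‖(Q ^ a) x - (Q ^ b) x‖ ^ 2 = c (a + a) - 2 * c (a + b) + c (b + b) := by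
      rw [norm_sub_sq_real, ← real_inner_self_eq_norm_sq, ← real_inner_self_eq_norm_sq,
        hcQ, hcQ, hcQ]
    have h2 := hN (a + a) (by omega)
    have h3 := hN (b + b) (by omega)
    have h4 := hlc (a + b)
    exact lt_of_pow_lt_pow_left₀ 2 he.le (by linarith)
  obtain ⟨y, hy⟩ := cauchySeq_tendsto_of_complete hcau
  have hyW : y ∈ W := by
    refine hW.mem_of_tendsto hy (Eventually.of_forall fun k => ?_)
    induction k with
    | zero => simpa using hx
    | succ k ih =>
      rw [pow_succ', ContinuousLinearMap.mul_apply]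
      exact hWS _ ih
  have hyQ : Q y = y := by
    have h1 : Tendsto (fun k => (Q ^ (k + 1)) x) atTop (nhds y) := hy.comp (tendsto_add_atTop_nat 1)
    have h2 : Tendsto (fun k => Q ((Q ^ k) x)) atTop (nhds (Q y)) :=
      (Q.continuous.tendsto y).comp hy
    simp only [pow_succ', ContinuousLinearMap.mul_apply] at h1
    exact tendsto_nhds_unique h2 h1
  have hxy := hperp y hyW hyQ
  have h3 : Tendsto c atTop (nhds 0) := by
    have : Tendsto (fun k => inner ℝ ((Q ^ k) x) x) atTop (nhds (inner ℝ y x)) :=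
      hy.inner tendsto_const_nhds
    rw [real_inner_comm, hxy] at this
    refine this.congr fun k => ?_
    have := hcQ k 0
    simpa using this
  have h4 := (Real.continuous_sqrt.tendsto 0).comp h3
  rw [Real.sqrt_zero] at h4
  refine h4.congr fun k => ?_
  simp [hcdef, Real.sqrt_sq]

namespace QRep
variable {H : Type} [NormedAddCommGroup H] [InnerProductSpace ℝ H] (ρ : QRep H)
variable {X Y : Type} [CompleteSpace H]

theorem near1 {β : Mean ℚ} (hb : β.Aff) {v : H} (hv : ρ.V β v = v) (b : ℚ) :
    β.E (fun n => ‖ρ.u ((n + b) / n) v - v‖) = 0 := by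
  have hbd : Bd (fun n : ℚ => ‖ρ.u ((n + b) / n) v - v‖) :=
    bd_norm_le (‖v‖ + ‖v‖) fun n => (norm_sub_le _ _).trans (add_le_add (ρ.le _ _) le_rfl)
  by_cases h0 : b = 0
  · subst h0
    rw [← β.const 0]
    refine hb.congr {0} hbd (Bd.const 0) fun n hn => ?_
    have hn : n ≠ 0 := by simpa using hn
    rw [add_zero, div_self hn, ρ.one, sub_self, norm_zero]
  · have h1 : β.E (fun n => ‖ρ.u ((n + b) / n) v - v‖ ^ 2) ≤ 0 := by
      have := β.mono (fun n => ‖ρ.u ((n + b) / n) v - v‖ ^ 2)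
        (fun n => 2 * ‖v‖ ^ 2 - 2 * inner ℝ (ρ.u ((n + b) / n) v) v) (hbd.pow 2)
        ((Bd.const _).sub ((Bd.const 2).mul (ρ.bd _ _ _))) (fun n => by
          rw [norm_sub_sq_real]
          have := pow_le_pow_left₀ (norm_nonneg _) (ρ.le ((n + b) / n) v) 2
          linarith)
      rw [β.sub (Bd.const _) ((Bd.const 2).mul (ρ.bd _ _ _)), β.const,
        β.smul _ _ (ρ.bd _ _ _), ← op_inner] at this
      have e := ρ.op_eq_V hb (b := b) (b' := 0) h0
      simp only [add_zero] at e
      rw [e, hv, real_inner_self_eq_norm_sq, sub_self] at this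
      exact this
    have h2 := β.sq_le hbd
    nlinarith [sq_nonneg (β.E (fun n => ‖ρ.u ((n + b) / n) v - v‖))]

theorem absorb {β : Mean ℚ} (hb : β.Aff) {v : H} (hv : ρ.V β v = v) (b b' : ℚ) (s : ℚ → ℚ) :
    ρ.op β (fun n => s n * (((n + b) / n) * ((n + b') / n))) v = ρ.op β s v := by
  refine ρ.op_ext _ _ _ _ _ _ fun w => ?_
  have hbd : ∀ b, Bd (fun n : ℚ => ‖ρ.u ((n + b) / n) v - v‖) := fun b =>
    bd_norm_le (‖v‖ + ‖v‖) fun n => (norm_sub_le _ _).trans (add_le_add (ρ.le _ _) le_rfl)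
  refine β.eq_of_abs_sub_le (h := fun n => ‖w‖ * (‖ρ.u ((n + b) / n) v - v‖ +
    ‖ρ.u ((n + b') / n) v - v‖)) (ρ.bd _ _ _) (ρ.bd _ _ _)
    ((Bd.const _).mul ((hbd b).add (hbd b'))) ?_ ?_
  · rw [β.smul _ _ ((hbd b).add (hbd b')), β.add _ _ (hbd b) (hbd b'), ρ.near1 hb hv,
      ρ.near1 hb hv]
    ring
  · intro n
    rw [← inner_sub_left, ρ.mul, ← map_sub, ρ.mul]
    refine (abs_real_inner_le_norm _ _).trans ?_
    rw [mul_comm]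
    refine mul_le_mul_of_nonneg_left ((ρ.le _ _).trans ?_) (norm_nonneg _)
    have : ρ.u ((n + b) / n) (ρ.u ((n + b') / n) v) - v = ρ.u ((n + b) / n) (ρ.u ((n + b') / n) v - v)
      + (ρ.u ((n + b) / n) v - v) := by rw [map_sub]; abel
    rw [this, add_comm]
    exact (norm_add_le _ _).trans (add_le_add le_rfl (ρ.le _ _))

noncomputable def Eop (β : Mean ℚ) (ε : ℚ) : H →L[ℝ] H := ρ.op β (fun n => n ^ 2 / (n ^ 2 - ε))
noncomputable def Iop (β : Mean ℚ) (ε : ℚ) : H →L[ℝ] H := ρ.op β (fun n => n / (n ^ 2 - ε))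

theorem J_eq (α : Mean ℚ) {β : Mean ℚ} (hb : β.Aff) (ε : ℚ) {v : H} (hv : ρ.V β v = v) :
    ρ.J α β ε v = ρ.Iop α ε (ρ.Eop β ε v) := by
  refine ext_inner_right ℝ fun w => ?_
  rw [J, Iop, op_inner, op_inner]
  change α.E (fun s => β.E (fun n => inner ℝ (ρ.u (Rw ε s n) v) w)) = _
  congr 1; ext s
  rw [← op_inner, Eop, u_op, ← ρ.absorb hb hv s (ε / s) (fun y => s / (s ^ 2 - ε) *
    (y ^ 2 / (y ^ 2 - ε)))]
  congr 2
  refine ρ.op_congr hb {0} fun n hn => ?_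
  have hn : n ≠ 0 := by simpa using hn
  rw [Rw]
  generalize n ^ 2 - ε = d
  generalize ε / s = c
  generalize s / (s ^ 2 - ε) = g
  rw [div_mul_div_comm, ← pow_two n, mul_assoc, div_mul_div_comm, mul_comm d, mul_div_mul_left _ _
    (pow_ne_zero 2 hn), mul_div_assoc]

theorem E_star {α β : Mean ℚ} (ha : α.Aff) (hb : β.Aff) {ε : ℚ} (hε : ε ^ 2 = 1) {v : H}
    (hv : ρ.V β v = v) : ρ.Eop (Mean.star α β) ε v = ρ.Eop α ε (ρ.Eop β ε v) := by
  refine ext_inner_right ℝ fun w => ?_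
  rw [Eop, op_inner, Mean.star_E, Eop, op_inner]
  have hε0 : ε ≠ 0 := by rintro rfl; norm_num at hε
  have hsq : ∀ x : ℚ, x ^ 2 = ε → x = 1 ∨ x = -1 := by
    intro x hx
    have h4 : (x ^ 2) ^ 2 = 1 := by rw [hx, hε]
    have : x ^ 2 = 1 := by nlinarith [sq_nonneg x]
    exact (sq_eq_sq_iff_eq_or_eq_neg.1 (this.trans (one_pow 2).symm))
  refine ha.congr {0, 1, -1} ?_ ?_ fun x hx => ?_
  · exact Mean.bd_inner' β (ρ.bd (fun p : ℚ × ℚ => _) _ _)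
  · exact ρ.bd _ _ _
  simp only [Finset.mem_insert, Finset.mem_singleton, not_or] at hx
  obtain ⟨hx0, hx1, hx2⟩ := hx
  have hxe : x ^ 2 - ε ≠ 0 := fun h => by
    rcases hsq x (by linarith) with h | h
    · exact hx1 h
    · exact hx2 h
  rw [← hb (1 / (x ^ 2 - ε)) (x / (x ^ 2 - ε)) (fun y => inner ℝ (ρ.u ((x - 1 / y) ^ 2 /
    ((x - 1 / y) ^ 2 - ε)) v) w) (one_div_ne_zero hxe) (ρ.bd _ _ _)]
  rw [Eop, u_op, ← ρ.absorb hb hv (ε / x) (ε / x), op_inner]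
  refine hb.congr {-x, 0} (ρ.bd _ _ _) (ρ.bd _ _ _) fun y hy => ?_
  simp only [Finset.mem_insert, Finset.mem_singleton, not_or] at hy
  have hy' : y + x ≠ 0 := fun h => hy.1 (by linarith)
  have hy0 := hy.2
  congr 3
  have e1 : 1 / (1 / (x ^ 2 - ε) * y + x / (x ^ 2 - ε)) = (x ^ 2 - ε) / (y + x) := by
    rw [one_div_mul_eq_div, ← add_div, one_div_div]
  have e2 : x - (x ^ 2 - ε) / (y + x) = (x * y + ε) / (y + x) := by
    field_simp; ring
  have e3 : ((x * y + ε) / (y + x)) ^ 2 - ε = (x ^ 2 - ε) * (y ^ 2 - ε) / (y + x) ^ 2 := by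
    field_simp
    ring
  rw [e1, e2, e3, div_pow, div_div_div_cancel_right₀ (pow_ne_zero 2 hy')]
  generalize y ^ 2 - ε = d
  have e4 : (y + ε / x) / y = (x * y + ε) / (x * y) := by field_simp
  rw [e4]
  by_cases hd : d = 0
  · simp [hd]
  · field_simp
end QRep


def Mean.lam (l : Mean ℚ) : ℕ → Mean ℚ
  | 0 => l
  | k + 1 => Mean.star l (Mean.lam l k)

theorem Mean.lam_aff {l : Mean ℚ} (hl : l.Aff) : ∀ k, (Mean.lam l k).Aff
  | 0 => hl
  | k + 1 => hl.star (Mean.lam_aff hl k)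

namespace QRep
variable {H : Type} [NormedAddCommGroup H] [InnerProductSpace ℝ H] (ρ : QRep H)
variable {X Y : Type}

def Inv : Submodule ℝ H where
  carrier := {v | ∀ x : ℚ, x ≠ 0 → ρ.u x v = v}
  add_mem' := fun {a b} ha hb x hx => by rw [map_add, ha x hx, hb x hx]
  zero_mem' := fun x _ => map_zero _
  smul_mem' := fun c a ha x hx => by rw [map_smul, ha x hx]

theorem mem_Inv {v : H} : v ∈ ρ.Inv ↔ ∀ x : ℚ, x ≠ 0 → ρ.u x v = v := Iff.rfl

theorem isClosed_Inv : IsClosed (ρ.Inv : Set H) := by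
  have : (ρ.Inv : Set H) = ⋂ x : ℚ, ⋂ _ : x ≠ 0, {v | ρ.u x v = v} := by
    ext v; simp [mem_Inv]
  rw [this]
  exact isClosed_iInter fun x => isClosed_iInter fun _ =>
    isClosed_eq (ρ.u x).continuous continuous_id

variable [CompleteSpace H]

theorem op_Inv {β : Mean ℚ} (hb : β.Aff) (S : Finset ℚ) (r : ℚ → ℚ) (hr : ∀ n, n ∉ S → r n ≠ 0)
    {v : H} (hv : v ∈ ρ.Inv) : ρ.op β r v = v := by
  refine ext_inner_right ℝ fun w => ?_
  rw [op_inner, ← β.const (inner ℝ v w)]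
  exact hb.congr S (ρ.bd _ _ _) (Bd.const _) fun n hn => by rw [hv _ (hr n hn)]

def H1 (l : Mean ℚ) : Submodule ℝ H where
  carrier := {v | ρ.V l v = v}
  add_mem' := fun {a b} ha hb => by
    simp only [Set.mem_setOf_eq] at *
    rw [map_add, ha, hb]
  zero_mem' := map_zero _
  smul_mem' := fun c a ha => by
    simp only [Set.mem_setOf_eq] at *
    rw [map_smul, ha]

theorem mem_H1 {l : Mean ℚ} {v : H} : v ∈ ρ.H1 l ↔ ρ.V l v = v := Iff.rfl

theorem isClosed_H1 (l : Mean ℚ) : IsClosed (ρ.H1 l : Set H) :=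
  isClosed_eq (ρ.V l).continuous continuous_id

noncomputable def Eadj (l : Mean ℚ) (ε : ℚ) : H →L[ℝ] H :=
  ρ.op l (fun n => (n ^ 2 / (n ^ 2 - ε))⁻¹)

def H2 (l : Mean ℚ) (ε : ℚ) : Submodule ℝ H where
  carrier := {v | ρ.V l v = v ∧ ρ.Eadj l ε (ρ.Eop l ε v) = v}
  add_mem' := fun {a b} ha hb => by
    simp only [Set.mem_setOf_eq] at *
    simp only [map_add, ha.1, hb.1, ha.2, hb.2, and_self]
  zero_mem' := by simp
  smul_mem' := fun c a ha => by
    simp only [Set.mem_setOf_eq] at *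
    simp only [map_smul, ha.1, ha.2, and_self]

theorem mem_H2 {l : Mean ℚ} {ε : ℚ} {v : H} :
    v ∈ ρ.H2 l ε ↔ ρ.V l v = v ∧ ρ.Eadj l ε (ρ.Eop l ε v) = v := Iff.rfl

theorem isClosed_H2 (l : Mean ℚ) (ε : ℚ) : IsClosed (ρ.H2 l ε : Set H) :=
  (isClosed_eq (ρ.V l).continuous continuous_id).inter
    (isClosed_eq ((ρ.Eadj l ε).continuous.comp (ρ.Eop l ε).continuous) continuous_id)

theorem sq_eps {ε : ℚ} (hε : ε ^ 2 = 1) {x : ℚ} (h1 : x ≠ 1) (h2 : x ≠ -1) : x ^ 2 - ε ≠ 0 := by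
  intro h
  have hx : x ^ 2 = ε := by linarith
  have h4 : (x ^ 2) ^ 2 = 1 := by rw [hx, hε]
  have : x ^ 2 = 1 := by nlinarith [sq_nonneg x]
  rcases sq_eq_one_iff.1 this with h | h
  · exact h1 h
  · exact h2 h

theorem Inv_le_H2 {l : Mean ℚ} (hl : l.Aff) {ε : ℚ} (hε : ε ^ 2 = 1) : ρ.Inv ≤ ρ.H2 l ε := by
  intro v hv
  have hE : ∀ n : ℚ, n ∉ ({0, 1, -1} : Finset ℚ) → n ^ 2 / (n ^ 2 - ε) ≠ 0 := by
    intro n hn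
    simp only [Finset.mem_insert, Finset.mem_singleton, not_or] at hn
    exact div_ne_zero (pow_ne_zero 2 hn.1) (sq_eps hε hn.2.1 hn.2.2)
  refine ⟨ρ.op_Inv hl {0, -1} _ ?_ hv, ?_⟩
  · intro n hn
    simp only [Finset.mem_insert, Finset.mem_singleton, not_or] at hn
    exact div_ne_zero (fun h => hn.2 (by linarith)) hn.1
  · rw [Eop, ρ.op_Inv hl {0, 1, -1} _ hE hv, Eadj,
      ρ.op_Inv hl {0, 1, -1} _ (fun n hn => inv_ne_zero (hE n hn)) hv]

theorem V_lam {l : Mean ℚ} (hl : l.Aff) (k : ℕ) (v : H) :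
    ρ.V (l.lam k) v = (ρ.V l ^ (k + 1)) v := by
  induction k with
  | zero => simp [Mean.lam]
  | succ k ih =>
    rw [Mean.lam, ρ.V_star hl (Mean.lam_aff hl k), ih, pow_succ' _ (k + 1)]
    rfl

theorem V_lam_H1 {l : Mean ℚ} (hl : l.Aff) (k : ℕ) {v : H} (hv : v ∈ ρ.H1 l) :
    ρ.V (l.lam k) v = v := by
  induction k with
  | zero => exact hv
  | succ k ih => rw [Mean.lam, ρ.V_star hl (Mean.lam_aff hl k), ih]; exact hv

theorem E_lam {l : Mean ℚ} (hl : l.Aff) {ε : ℚ} (hε : ε ^ 2 = 1) (k : ℕ) {v : H}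
    (hv : v ∈ ρ.H1 l) : ρ.Eop (l.lam k) ε v = (ρ.Eop l ε ^ (k + 1)) v := by
  induction k with
  | zero => simp [Mean.lam]
  | succ k ih =>
    rw [Mean.lam, ρ.E_star hl (Mean.lam_aff hl k) hε (ρ.V_lam_H1 hl k hv), ih, pow_succ' _ (k + 1)]
    rfl

theorem J_lam {l : Mean ℚ} (hl : l.Aff) {ε : ℚ} (hε : ε ^ 2 = 1) (k : ℕ) {v : H}
    (hv : v ∈ ρ.H1 l) : ρ.J l (l.lam k) ε v = ρ.Iop l ε ((ρ.Eop l ε ^ (k + 1)) v) := by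
  rw [ρ.J_eq l (Mean.lam_aff hl k) ε (ρ.V_lam_H1 hl k hv), ρ.E_lam hl hε k hv]

theorem op_inv_perp {l : Mean ℚ} (hl : l.Aff) {v : H} (hv : ∀ z ∈ ρ.Inv, inner ℝ v z = 0) :
    ρ.op l (fun n => n⁻¹) v = 0 := by
  set y := ρ.op l (fun n => n⁻¹) v with hy
  have hyI : y ∈ ρ.Inv := by
    intro x hx
    rw [hy, u_op, ← ρ.op_aff hl _ x 0 hx]
    congr 2; ext n
    rw [add_zero, mul_inv, ← mul_assoc, mul_inv_cancel₀ hx, one_mul]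
  have h1 : inner ℝ y y = inner ℝ v y := by
    conv_lhs => rw [hy]
    rw [op_inner, ← l.const (inner ℝ v y)]
    refine hl.congr {0} (ρ.bd _ _ _) (Bd.const _) fun n hn => ?_
    have hn : n ≠ 0 := by simpa using hn
    rw [ρ.adj, inv_inv, hyI n hn]
  rw [hv y hyI] at h1
  exact inner_self_eq_zero.1 h1

theorem I_H2 {l : Mean ℚ} (hl : l.Aff) {ε : ℚ} {v : H} (hv2 : v ∈ ρ.H2 l ε)
    (hv : ∀ z ∈ ρ.Inv, inner ℝ v z = 0) : ρ.Iop l ε v = 0 := by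
  have hE2 : ‖ρ.Eop l ε v‖ ^ 2 = ‖v‖ ^ 2 := by
    rw [← real_inner_self_eq_norm_sq, ← real_inner_self_eq_norm_sq]
    nth_rw 1 [Eop]
    rw [op_adj]
    have := hv2.2
    rw [Eadj] at this
    rw [this]
  have hbd : Bd (fun n : ℚ => ‖ρ.u (n ^ 2 / (n ^ 2 - ε)) v - ρ.Eop l ε v‖) :=
    bd_norm_le (‖v‖ + ‖v‖) fun n => (norm_sub_le _ _).trans (add_le_add (ρ.le _ _) (ρ.op_le _ _ _))
  have h1 : l.E (fun n => ‖ρ.u (n ^ 2 / (n ^ 2 - ε)) v - ρ.Eop l ε v‖ ^ 2) ≤ 0 := by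
    have := l.mono (fun n => ‖ρ.u (n ^ 2 / (n ^ 2 - ε)) v - ρ.Eop l ε v‖ ^ 2)
      (fun n => 2 * ‖v‖ ^ 2 - 2 * inner ℝ (ρ.u (n ^ 2 / (n ^ 2 - ε)) v) (ρ.Eop l ε v)) (hbd.pow 2)
      ((Bd.const _).sub ((Bd.const 2).mul (ρ.bd _ _ _))) (fun n => by
        rw [norm_sub_sq_real]
        have := pow_le_pow_left₀ (norm_nonneg _) (ρ.le (n ^ 2 / (n ^ 2 - ε)) v) 2
        linarith)
    rw [l.sub (Bd.const _) ((Bd.const 2).mul (ρ.bd _ _ _)), l.const,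
      l.smul _ _ (ρ.bd _ _ _), ← op_inner] at this
    change _ ≤ 2 * ‖v‖ ^ 2 - 2 * inner ℝ (ρ.Eop l ε v) (ρ.Eop l ε v) at this
    rw [real_inner_self_eq_norm_sq, hE2, sub_self] at this
    exact this
  have h2 : l.E (fun n => ‖ρ.u (n ^ 2 / (n ^ 2 - ε)) v - ρ.Eop l ε v‖) = 0 := by
    have h2 := l.sq_le hbd
    nlinarith [sq_nonneg (l.E (fun n => ‖ρ.u (n ^ 2 / (n ^ 2 - ε)) v - ρ.Eop l ε v‖))]
  have h3 : ρ.Iop l ε v = ρ.op l (fun n => n⁻¹) (ρ.Eop l ε v) := by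
    rw [Iop, ρ.op_congr hl {0} (s := fun n => n⁻¹ * (n ^ 2 / (n ^ 2 - ε)))]
    · refine ρ.op_ext _ _ _ _ _ _ fun w => ?_
      refine l.eq_of_abs_sub_le (h := fun n => ‖w‖ * ‖ρ.u (n ^ 2 / (n ^ 2 - ε)) v - ρ.Eop l ε v‖)
        (ρ.bd _ _ _) (ρ.bd _ _ _) ((Bd.const _).mul hbd) ?_ ?_
      · rw [l.smul _ _ hbd, h2, mul_zero]
      · intro n
        rw [← inner_sub_left, ρ.mul, ← map_sub]
        refine (abs_real_inner_le_norm _ _).trans ?_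
        rw [mul_comm]
        exact mul_le_mul_of_nonneg_left (ρ.le _ _) (norm_nonneg _)
    · intro n hn
      have hn : n ≠ 0 := by simpa using hn
      rw [← mul_div_assoc, sq, inv_mul_cancel_left₀ hn]
  rw [h3, Eop, op_comm, ρ.op_inv_perp hl hv, map_zero]

theorem V_fix {l : Mean ℚ} (hl : l.Aff) {z : H} (h : ρ.V l (ρ.V l z) = z) : ρ.V l z = z := by
  have h1 := ρ.V_nonneg hl (z - ρ.V l z)
  rw [map_sub, h, ← neg_sub, inner_neg_left, real_inner_self_eq_norm_sq] at h1
  have h2 : ‖z - ρ.V l z‖ = 0 := by nlinarith [norm_nonneg (z - ρ.V l z)]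
  exact (sub_eq_zero.1 (norm_eq_zero.1 h2)).symm

theorem J_perp_H1 {l : Mean ℚ} (hl : l.Aff) (ε : ℚ) {v : H}
    (hv : ∀ z ∈ ρ.H1 l, inner ℝ v z = 0) :
    Tendsto (fun k => ρ.J l (l.lam k) ε v) atTop (nhds 0) := by
  have main : ∀ v : H, (∀ z ∈ ρ.H1 l, inner ℝ v z = 0) → ‖v‖ ≤ 1 →
      Tendsto (fun k => ρ.J l (l.lam k) ε v) atTop (nhds 0) := by
    intro v hv hv1
    have hT := lemT (ρ.V l) (ρ.V l) (fun x => ρ.op_le _ _ _) (ρ.V_adj hl) (fun x => rfl) ⊤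
      (by simp) (fun _ _ => trivial) v trivial (fun z _ hz => hv z (ρ.V_fix hl hz))
    have hT' := (hT.comp (tendsto_add_atTop_nat 1)).pow 2
    rw [tendsto_zero_iff_norm_tendsto_zero]
    refine tendsto_order.2 ⟨fun a ha => Eventually.of_forall fun k => ha.trans_le (norm_nonneg _),
      fun e he => ?_⟩
    have := hT'.eventually_lt_const (u := e ^ 8) (by
      have : 0 < e ^ 8 := by positivity
      simpa using this)
    filter_upwards [this] with k hk
    simp only [Function.comp] at hk
    refine lt_of_pow_lt_pow_left₀ 8 he.le ?_
    refine (ρ.stepA hl (Mean.lam_aff hl k) ε hv1).trans_lt ?_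
    rw [ρ.V_lam hl]
    exact hk
  set c := ‖v‖ + 1 with hc
  have hc0 : 0 < c := by positivity
  have h1 := main (c⁻¹ • v) (fun z hz => by rw [inner_smul_left, hv z hz, mul_zero]) (by
    rw [norm_smul, norm_inv, Real.norm_of_nonneg hc0.le, inv_mul_le_iff₀ hc0]
    linarith)
  have h2 := h1.const_smul c
  rw [smul_zero] at h2
  refine h2.congr fun k => ?_
  rw [map_smul, smul_inv_smul₀ hc0.ne']

theorem J_perp {l : Mean ℚ} (hl : l.Aff) {ε : ℚ} (hε : ε ^ 2 = 1) {v : H}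
    (hv : ∀ z ∈ ρ.Inv, inner ℝ v z = 0) :
    Tendsto (fun k => ρ.J l (l.lam k) ε v) atTop (nhds 0) := by
  have hI := ρ.Inv_le_H2 hl hε
  have h21 : ρ.H2 l ε ≤ ρ.H1 l := fun z hz => hz.1
  haveI : CompleteSpace (ρ.H1 l) := (ρ.isClosed_H1 l).completeSpace_coe
  haveI : CompleteSpace (ρ.H2 l ε) := (ρ.isClosed_H2 l ε).completeSpace_coe
  obtain ⟨v1, hv1, v2, hv2, rfl⟩ := (ρ.H1 l).exists_add_mem_mem_orthogonal v
  obtain ⟨vb, hvb, va, hva, rfl⟩ := (ρ.H2 l ε).exists_add_mem_mem_orthogonal v1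
  have hva1 : va ∈ ρ.H1 l := by
    have := (ρ.H1 l).sub_mem hv1 (h21 hvb)
    simpa using this
  have hv2' : ∀ z ∈ ρ.H1 l, inner ℝ v2 z = 0 := fun z hz =>
    Submodule.inner_left_of_mem_orthogonal hz hv2
  have hva' : ∀ z ∈ ρ.H2 l ε, inner ℝ va z = 0 := fun z hz =>
    Submodule.inner_left_of_mem_orthogonal hz hva
  have hvb' : ∀ z ∈ ρ.Inv, inner ℝ vb z = 0 := fun z hz => by
    have := hv z hz
    rw [inner_add_left, inner_add_left, hva' z (hI hz), hv2' z (h21 (hI hz))] at this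
    simpa using this
  have hEH : ∀ z ∈ ρ.H1 l, ρ.Eadj l ε (ρ.Eop l ε z) ∈ ρ.H1 l := by
    intro z hz
    have hz' : ρ.V l z = z := hz
    rw [mem_H1, V, Eadj, op_comm, Eop, ρ.op_comm l l (fun n => (n + 1) / n)]
    rw [V] at hz'
    rw [hz']
  have hTa := lemT (ρ.Eop l ε) (ρ.Eadj l ε) (fun x => ρ.op_le _ _ _)
    (fun x y => ρ.op_adj _ _ _ _) (fun x => ρ.op_comm _ _ _ _ _) (ρ.H1 l) (ρ.isClosed_H1 l) hEH
    va hva1 (fun z hz h => hva' z ⟨hz, h⟩)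
  have hJa : Tendsto (fun k => ρ.J l (l.lam k) ε va) atTop (nhds 0) := by
    refine squeeze_zero_norm (a := fun k : ℕ => ‖(ρ.Eop l ε ^ (k + 1)) va‖) (fun k => ?_)
      (hTa.comp (tendsto_add_atTop_nat 1))
    rw [ρ.J_lam hl hε k hva1]
    exact ρ.op_le _ _ _
  have hIE : ∀ k : ℕ, ∀ z, ρ.Iop l ε ((ρ.Eop l ε ^ k) z) = (ρ.Eop l ε ^ k) (ρ.Iop l ε z) := by
    intro k
    induction k with
    | zero => intro z; simp
    | succ k ih =>
      intro z
      rw [pow_succ, ContinuousLinearMap.mul_apply, ih, ContinuousLinearMap.mul_apply]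
      congr 1
      exact ρ.op_comm _ _ _ _ _
  have hJb : ∀ k, ρ.J l (l.lam k) ε vb = 0 := fun k => by
    rw [ρ.J_lam hl hε k (h21 hvb), hIE, ρ.I_H2 hl hvb hvb', map_zero]
  have h2 := ρ.J_perp_H1 hl ε hv2'
  have := hJa.add h2
  rw [add_zero] at this
  refine this.congr fun k => ?_
  rw [map_add, map_add, hJb, zero_add]

theorem J_Inv {α β : Mean ℚ} (ha : α.Aff) (hb : β.Aff) {ε : ℚ} (hε : ε ^ 2 = 1) {v : H}
    (hv : v ∈ ρ.Inv) : ρ.J α β ε v = v := by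
  refine ext_inner_right ℝ fun w => ?_
  rw [J, op_inner, ← α.const (inner ℝ v w)]
  change α.E (fun s => β.E (fun n => inner ℝ (ρ.u (Rw ε s n) v) w)) = _
  refine ha.congr {0, 1, -1} (Mean.bd_inner' β (ρ.bd (fun p : ℚ × ℚ => Rw ε p.1 p.2) _ _))
    (Bd.const _) fun s hs => ?_
  simp only [Finset.mem_insert, Finset.mem_singleton, not_or] at hs
  rw [← β.const (inner ℝ v w)]
  refine hb.congr {-s, -(ε/s), 1, -1} (ρ.bd _ _ _) (Bd.const _) fun n hn => ?_
  simp only [Finset.mem_insert, Finset.mem_singleton, not_or] at hn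
  rw [hv]
  refine div_ne_zero (mul_ne_zero (div_ne_zero hs.1 (sq_eps hε hs.2.1 hs.2.2)) (mul_ne_zero ?_ ?_))
    (sq_eps hε hn.2.2.1 hn.2.2.2)
  · intro h; exact hn.1 (by linarith)
  · intro h; exact hn.2.1 (by linarith)

theorem abstract_main {l : Mean ℚ} (hl : l.Aff) {ε : ℚ} (hε : ε ^ 2 = 1) {κ : ℚ} (hκ : κ ≠ 0)
    (T : Finset ℚ) {v e : H} (he : e ∈ ρ.Inv)
    (hT : ∀ t : ℚ, t ∉ T → inner ℝ (ρ.u (κ * (t / (t ^ 2 - ε))) v) v = 0) : inner ℝ v e = 0 := by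
  haveI : CompleteSpace ρ.Inv := ρ.isClosed_Inv.completeSpace_coe
  obtain ⟨p, hp, r, hr, hvpr⟩ := ρ.Inv.exists_add_mem_mem_orthogonal v
  have hr' : ∀ z ∈ ρ.Inv, inner ℝ r z = 0 := fun z hz =>
    Submodule.inner_left_of_mem_orthogonal hz hr
  have hJ0 : ∀ k, inner ℝ (ρ.u κ (ρ.J l (l.lam k) ε v)) v = 0 := by
    intro k
    have hb := Mean.lam_aff hl k
    rw [J, u_op, op_inner, ← l.const 0]
    change l.E (fun s => (l.lam k).E (fun n => inner ℝ (ρ.u (κ * Rw ε s n) v) v)) = _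
    refine hl.congr {0, 1, -1} (Mean.bd_inner' _ (ρ.bd (fun p : ℚ × ℚ => κ * Rw ε p.1 p.2) _ _))
      (Bd.const _) fun s hs => ?_
    simp only [Finset.mem_insert, Finset.mem_singleton, not_or] at hs
    have hs2 := sq_eps hε hs.2.1 hs.2.2
    rw [← (l.lam k).const 0]
    refine hb.congr ({-s, 1, -1} ∪ T.image (fun t => (t * s - ε) / (s - t)))
      (ρ.bd _ _ _) (Bd.const _) fun n hn => ?_
    simp only [Finset.mem_insert, Finset.mem_singleton, Finset.mem_union, Finset.mem_image,
      not_or, not_exists, not_and] at hn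
    obtain ⟨⟨hn1, hn2, hn3⟩, hn4⟩ := hn
    have hns : n + s ≠ 0 := fun h => hn1 (by linarith)
    have hn5 := sq_eps hε hn2 hn3
    have ht : (s * n + ε) / (n + s) ∉ T := by
      intro hmem
      have := hn4 _ hmem
      apply this
      have hd : s - (s * n + ε) / (n + s) = (s ^ 2 - ε) / (n + s) := by field_simp; ring
      rw [hd, div_eq_iff (div_ne_zero hs2 hns)]
      field_simp
      ring
    rw [← hT _ ht]
    congr 4
    have e3 : ((s * n + ε) / (n + s)) ^ 2 - ε = (s ^ 2 - ε) * (n ^ 2 - ε) / (n + s) ^ 2 := by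
      field_simp
      ring
    rw [e3, Rw]
    have e4 : n + ε / s = (s * n + ε) / s := by field_simp [hs.1]
    have hs0 := hs.1
    rw [e4]
    generalize n ^ 2 - ε = d at *
    generalize s ^ 2 - ε = d' at *
    field_simp
  have hlim : Tendsto (fun k => inner ℝ (ρ.u κ (ρ.J l (l.lam k) ε v)) v) atTop
      (nhds (inner ℝ p v)) := by
    have h1 := ρ.J_perp hl hε hr'
    have h2 : Tendsto (fun k => ρ.J l (l.lam k) ε v) atTop (nhds p) := by
      have := (tendsto_const_nhds (x := p)).add h1
      rw [add_zero] at this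
      refine this.congr fun k => ?_
      rw [hvpr, map_add, ρ.J_Inv hl (Mean.lam_aff hl k) hε hp]
    have h3 := ((ρ.u κ).continuous.tendsto p).comp h2
    rw [hp κ hκ] at h3
    exact h3.inner tendsto_const_nhds
  simp only [hJ0] at hlim
  have h0 : inner ℝ p v = 0 := (tendsto_nhds_unique hlim tendsto_const_nhds)
  rw [hvpr, inner_add_right, real_inner_comm, real_inner_comm r p] at h0
  rw [hr' p hp, add_zero] at h0
  have hp0 : p = 0 := inner_self_eq_zero.1 h0
  rw [hvpr, hp0, zero_add]
  exact hr' e he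
end QRep


namespace Mean
variable {X Y : Type}

noncomputable def avg (s : Finset X) (hs : s.Nonempty) : Mean X where
  E f := (∑ x ∈ s, f x) / (s.card : ℝ)
  add f g _ _ := by rw [Finset.sum_add_distrib, add_div]
  smul c f _ := by rw [← Finset.mul_sum, mul_div_assoc]
  mono f g _ _ h := by
    gcongr
    exact h _
  one := by
    have : (s.card : ℝ) ≠ 0 := by
      have := hs.card_pos
      positivity
    simp [this]

theorem ultra_tendsto (U : Ultrafilter ℕ) (m : ℕ → Mean X) {f : X → ℝ} (hf : Bd f) :
    Tendsto (fun K => (m K).E f) U (nhds (limUnder (U : Filter ℕ) (fun K => (m K).E f))) := by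
  obtain ⟨C, hC⟩ := hf
  apply tendsto_nhds_limUnder
  obtain ⟨x, -, hx⟩ := (isCompact_Icc (a := -C) (b := C)).ultrafilter_le_nhds
    (U.map (fun K => (m K).E f)) (by
      simp only [le_principal_iff, Ultrafilter.mem_coe, Ultrafilter.mem_map]
      refine Filter.univ_mem' fun K => ?_
      exact Set.mem_Icc.2 (_root_.abs_le.1 ((m K).abs_le hC)))
  exact ⟨x, hx⟩

noncomputable def ultra (U : Ultrafilter ℕ) (m : ℕ → Mean X) : Mean X where
  E f := limUnder (U : Filter ℕ) (fun K => (m K).E f)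
  add f g hf hg := by
    refine Tendsto.limUnder_eq ?_
    simp only [fun K => (m K).add f g hf hg]
    exact (ultra_tendsto U m hf).add (ultra_tendsto U m hg)
  smul c f hf := by
    refine Tendsto.limUnder_eq ?_
    simp only [fun K => (m K).smul c f hf]
    exact (ultra_tendsto U m hf).const_mul c
  mono f g hf hg h := le_of_tendsto_of_tendsto' (ultra_tendsto U m hf) (ultra_tendsto U m hg)
    fun K => (m K).mono f g hf hg h
  one := by
    refine Tendsto.limUnder_eq ?_
    simp only [fun K => (m K).one]
    exact tendsto_const_nhds

theorem ultra_congr (U : Ultrafilter ℕ) (hU : (U : Filter ℕ) ≤ atTop) (m : ℕ → Mean X)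
    {f g : X → ℝ} (hf : Bd f) (hg : Bd g)
    (h : Tendsto (fun K => (m K).E f - (m K).E g) atTop (nhds 0)) :
    (ultra U m).E f = (ultra U m).E g := by
  have h1 := (ultra_tendsto U m hf).sub (ultra_tendsto U m hg)
  have := tendsto_nhds_unique h1 (h.mono_left hU)
  exact sub_eq_zero.1 this

theorem ultra_ge (U : Ultrafilter ℕ) (m : ℕ → Mean X)
    {f : X → ℝ} (hf : Bd f) (c : ℝ) (h : ∀ᶠ K in (U : Filter ℕ), c ≤ (m K).E f) :
    c ≤ (ultra U m).E f := ge_of_tendsto (ultra_tendsto U m hf) h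

/-- multiplicatively invariant mean carried by positive rationals -/
structure MulInv (M : Mean ℚ) : Prop where
  dil : ∀ (q : ℚ) (f : ℚ → ℝ), 0 < q → Bd f → M.E (fun n => f (q * n)) = M.E f
  pos : ∀ f g : ℚ → ℝ, (∀ n : ℕ, 0 < n → f n = g n) → M.E f = M.E g

end Mean

theorem sum_diff_le (S T : Finset ℕ) (hST : S.card = T.card) (f : ℕ → ℝ) (C : ℝ)
    (hC : ∀ n, |f n| ≤ C) :
    |∑ n ∈ T, f n - ∑ n ∈ S, f n| ≤ 2 * C * (S.card - (S ∩ T).card) := by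
  have h1 := Finset.sum_inter_add_sum_sdiff S T f
  have h2 := Finset.sum_inter_add_sum_sdiff T S f
  rw [Finset.inter_comm T S] at h2
  have key : ∀ A : Finset ℕ, |∑ n ∈ A, f n| ≤ A.card * C := fun A => by
    refine (Finset.abs_sum_le_sum_abs _ _).trans ?_
    refine (Finset.sum_le_card_nsmul _ _ C fun n _ => hC n).trans ?_
    simp
  have e1 : ((S \ T).card : ℝ) = S.card - (S ∩ T).card := by
    have := Finset.card_inter_add_card_sdiff S T
    rw [← this]; push_cast; ring
  have e2 : ((T \ S).card : ℝ) = S.card - (S ∩ T).card := by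
    have := Finset.card_inter_add_card_sdiff T S
    rw [Finset.inter_comm T S] at this
    rw [hST, ← this]; push_cast; ring
  have k1 := key (S \ T)
  have k2 := key (T \ S)
  rw [e1] at k1
  rw [e2] at k2
  rw [← h1, ← h2]
  rw [abs_le] at *
  constructor <;> linarith [k1.1, k1.2, k2.1, k2.2]

theorem exists_mulInv (Φ : ℕ → Finset ℕ) (hne : ∀ K, (Φ K).Nonempty)
    (hpos : ∀ K, ∀ n ∈ Φ K, 0 < n)
    (hF : ∀ x : ℕ, 0 < x →
      Tendsto (fun K => ((Φ K ∩ (Φ K).image (fun n => x * n)).card : ℝ) / ((Φ K).card : ℝ))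
        atTop (nhds 1)) (w : ℕ → ℝ) (hw : Bd w) (δ : ℝ)
    (hfr : ∃ᶠ K in atTop, δ ≤ (∑ n ∈ Φ K, w n) / ((Φ K).card : ℝ)) :
    ∃ M : Mean ℚ, M.MulInv ∧ ∀ W : ℚ → ℝ, Bd W → (∀ n : ℕ, W n = w n) → δ ≤ M.E W := by
  have hnb : (atTop ⊓ 𝓟 {K | δ ≤ (∑ n ∈ Φ K, w n) / ((Φ K).card : ℝ)}).NeBot :=
    Filter.frequently_iff_neBot.1 hfr
  set U := Ultrafilter.of (atTop ⊓ 𝓟 {K | δ ≤ (∑ n ∈ Φ K, w n) / ((Φ K).card : ℝ)}) with hUdef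
  have hU := Ultrafilter.of_le (atTop ⊓ 𝓟 {K | δ ≤ (∑ n ∈ Φ K, w n) / ((Φ K).card : ℝ)})
  rw [← hUdef] at hU
  have hU1 : (U : Filter ℕ) ≤ atTop := hU.trans inf_le_left
  have hU2 := hU.trans inf_le_right
  rw [le_principal_iff] at hU2
  let m : ℕ → Mean ℚ := fun K => (Mean.avg (Φ K) (hne K)).map (fun n : ℕ => (n : ℚ))
  have mE : ∀ K f, (m K).E f = (∑ n ∈ Φ K, f (n : ℚ)) / ((Φ K).card : ℝ) := fun K f => rfl
  have hnat : ∀ (x : ℕ) (f : ℚ → ℝ), 0 < x → Bd f →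
      (Mean.ultra U m).E (fun n => f (x * n)) = (Mean.ultra U m).E f := by
    intro x f hx hf
    obtain ⟨C, hC⟩ := id hf
    apply Mean.ultra_congr U hU1 m (hf.comp' _) hf
    have hlim : Tendsto (fun K => 2 * C * (1 - ((Φ K ∩ (Φ K).image (fun n => x * n)).card : ℝ)
        / ((Φ K).card : ℝ))) atTop (nhds 0) := by
      simpa using ((hF x hx).const_sub 1).const_mul (2 * C)
    refine squeeze_zero_norm (fun K => ?_) hlim
    have hinj : Function.Injective (fun n : ℕ => x * n) := fun a b h =>
      Nat.eq_of_mul_eq_mul_left hx h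
    have h := sum_diff_le (Φ K) ((Φ K).image (fun n => x * n))
      (Finset.card_image_of_injective _ hinj).symm (fun n => f (n : ℚ)) C (fun n => hC _)
    rw [Finset.sum_image (fun a _ b _ h => hinj h)] at h
    have hc : (0 : ℝ) < (Φ K).card := by exact_mod_cast (hne K).card_pos
    rw [mE, mE, ← sub_div, Real.norm_eq_abs, abs_div, abs_of_pos hc, div_le_iff₀ hc]
    push_cast at h
    refine h.trans (le_of_eq ?_)
    field_simp
  refine ⟨Mean.ultra U m, ⟨?_, ?_⟩, ?_⟩
  · intro q f hq hf
    rw [← hnat q.den (fun n => f (q * n)) q.den_pos (hf.comp' _)]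
    have hn : 0 < q.num.toNat := by
      have := Rat.num_pos.2 hq
      omega
    rw [← hnat q.num.toNat f hn hf]
    congr 1; ext n; congr 1
    rw [← mul_assoc, Rat.mul_den_eq_num]
    congr 1
    have := Rat.num_pos.2 hq
    have h2 : ((q.num.toNat : ℤ)) = q.num := Int.toNat_of_nonneg this.le
    have h3 : ((q.num.toNat : ℤ) : ℚ) = (q.num : ℚ) := by rw [h2]
    rw [← h3, Int.cast_natCast]
  · intro f g h
    show limUnder _ _ = limUnder _ _
    congr 1; ext K
    rw [mE, mE]
    congr 1
    exact Finset.sum_congr rfl fun n hn => h n (hpos K n hn)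
  · intro W hW h
    apply Mean.ultra_ge U m hW
    filter_upwards [hU2] with K hK
    rw [mE]
    simpa [h] using hK


theorem exists_transInv : ∃ L : Mean ℚ, ∀ (b : ℚ) (f : ℚ → ℝ), Bd f →
    L.E (fun n => f (n + b)) = L.E f := by
  have hN : ∀ j : ℕ, (Finset.range ((j + 1) * j.factorial)).Nonempty := fun j => by
    rw [Finset.nonempty_range_iff]
    have := j.factorial_pos
    positivity
  let m : ℕ → Mean ℚ := fun j => (Mean.avg _ (hN j)).map (fun k : ℕ => (k : ℚ) / (j.factorial : ℚ))
  have mE : ∀ j f, (m j).E f = (∑ k ∈ Finset.range ((j + 1) * j.factorial),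
    f ((k : ℚ) / (j.factorial : ℚ))) / ((Finset.range ((j + 1) * j.factorial)).card : ℝ) :=
    fun j f => rfl
  have hU : ((hyperfilter ℕ : Ultrafilter ℕ) : Filter ℕ) ≤ atTop := Nat.hyperfilter_le_atTop
  have hpos : ∀ (b : ℚ) (f : ℚ → ℝ), 0 ≤ b → Bd f →
      (Mean.ultra (hyperfilter ℕ) m).E (fun n => f (n + b)) =
        (Mean.ultra (hyperfilter ℕ) m).E f := by
    intro b f hb hf
    obtain ⟨C, hC⟩ := id hf
    have hC0 : 0 ≤ C := (abs_nonneg _).trans (hC 0)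
    apply Mean.ultra_congr _ hU m (hf.comp' _) hf
    have hlim : Tendsto (fun j : ℕ => 2 * C * (b : ℝ) * (1 / ((j : ℝ) + 1))) atTop (nhds 0) := by
      simpa using (tendsto_one_div_add_atTop_nhds_zero_nat (𝕜 := ℝ)).const_mul (2 * C * (b : ℝ))
    refine squeeze_zero_norm' ?_ hlim
    filter_upwards [eventually_ge_atTop b.den] with j hj
    obtain ⟨d, hd⟩ : b.den ∣ j.factorial := Nat.dvd_factorial b.den_pos hj
    have hjp : (0 : ℚ) < j.factorial := by exact_mod_cast j.factorial_pos
    obtain ⟨B, hB⟩ : ∃ B : ℕ, (B : ℚ) = b * j.factorial := by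
      refine ⟨b.num.toNat * d, ?_⟩
      have h2 : ((b.num.toNat : ℤ)) = b.num := Int.toNat_of_nonneg (Rat.num_nonneg.2 hb)
      have h3 : ((b.num.toNat : ℤ) : ℚ) = (b.num : ℚ) := by rw [h2]
      rw [Int.cast_natCast] at h3
      rw [hd]; push_cast
      rw [h3, ← mul_assoc, Rat.mul_den_eq_num]
    set N := (j + 1) * j.factorial with hNdef
    have hinj : Function.Injective (fun n : ℕ => n + B) := fun a b h => by simpa using h
    have h := sum_diff_le (Finset.range N) ((Finset.range N).image (fun n => n + B))
      (Finset.card_image_of_injective _ hinj).symm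
      (fun n => f ((n : ℚ) / (j.factorial : ℚ))) C (fun n => hC _)
    rw [Finset.sum_image (fun a _ b _ h => hinj h)] at h
    have hcard : N - B ≤ (Finset.range N ∩ (Finset.range N).image (fun n => n + B)).card := by
      rw [← Nat.card_Ico]
      apply Finset.card_le_card
      intro k hk
      rw [Finset.mem_Ico] at hk
      simp only [Finset.mem_inter, Finset.mem_range, Finset.mem_image]
      exact ⟨hk.2, k - B, by omega, by omega⟩
    have hcard' : (N : ℝ) - B ≤
        ((Finset.range N ∩ (Finset.range N).image (fun n => n + B)).card : ℝ) := by
      rw [sub_le_iff_le_add]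
      exact_mod_cast (by omega)
    have hc : (0 : ℝ) < (Finset.range N).card := by exact_mod_cast (hN j).card_pos
    rw [mE, mE, ← sub_div, Real.norm_eq_abs, abs_div, abs_of_pos hc, div_le_iff₀ hc]
    have e : ∀ k : ℕ, ((k + B : ℕ) : ℚ) / (j.factorial : ℚ) = (k : ℚ) / j.factorial + b := by
      intro k
      push_cast
      rw [hB]
      field_simp
    simp only [e] at h
    refine h.trans ?_
    have hBr : (B : ℝ) = (b : ℝ) * j.factorial := by exact_mod_cast hB
    have hrhs : 2 * C * (b : ℝ) * (1 / ((j : ℝ) + 1)) * ((Finset.range N).card : ℝ)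
        = 2 * C * B := by
      rw [Finset.card_range, hNdef, hBr]
      push_cast
      field_simp
    rw [hrhs, Finset.card_range]
    apply mul_le_mul_of_nonneg_left _ (by positivity)
    linarith
  refine ⟨Mean.ultra (hyperfilter ℕ) m, fun b f hf => ?_⟩
  rcases le_total 0 b with hb | hb
  · exact hpos b f hb hf
  · have := hpos (-b) (fun n => f (n + b)) (by linarith) (hf.comp' _)
    rw [← this]
    congr 1; ext n; congr 1; ring

theorem exists_aff {M : Mean ℚ} (hM : M.MulInv) : ∃ l : Mean ℚ, l.Aff := by
  obtain ⟨L, hL⟩ := exists_transInv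
  let P : Mean ℚ := (Mean.prod M L).map (fun p => p.1 * p.2)
  have PE : ∀ f, P.E f = M.E (fun c => L.E (fun n => f (c * n))) := fun f => rfl
  let Q : Mean ℚ := (Mean.prod (Mean.avg ({1, -1} : Finset ℚ) (by simp)) P).map
    (fun p => p.1 * p.2)
  have QE : ∀ f, Q.E f = (P.E (fun n => f n) + P.E (fun n => f (-n))) / 2 := by
    intro f
    show (∑ s ∈ ({1, -1} : Finset ℚ), P.E (fun n => f (s * n))) / _ = _
    have h : (1 : ℚ) ∉ ({-1} : Finset ℚ) := by norm_num
    rw [Finset.sum_insert h, Finset.card_insert_of_notMem h]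
    norm_num
  have Pt : ∀ (b : ℚ) (f : ℚ → ℝ), Bd f → P.E (fun n => f (n + b)) = P.E f := by
    intro b f hf
    rw [PE, PE]
    apply hM.pos
    intro c hc
    have hc' : (c : ℚ) ≠ 0 := by positivity
    rw [← hL (b / c) (fun n => f (c * n)) (hf.comp' _)]
    congr 1; ext n; congr 1; field_simp
  have Pd : ∀ (a : ℚ) (f : ℚ → ℝ), 0 < a → Bd f → P.E (fun n => f (a * n)) = P.E f := by
    intro a f ha hf
    rw [PE, PE, ← hM.dil a (fun c => L.E (fun n => f (c * n))) ha
      (Mean.bd_inner' L (hf.comp' (fun p : ℚ × ℚ => p.1 * p.2)))]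
    simp only [mul_assoc]
  refine ⟨Q, fun a b f ha hf => ?_⟩
  have h1 : Q.E (fun n => f (a * n + b)) = Q.E (fun n => f (a * n)) := by
    rw [QE, QE]
    congr 2
    · rw [← Pt (b / a) (fun n => f (a * n)) (hf.comp' _)]
      congr 1; ext n; congr 1; field_simp
    · rw [← Pt (- (b / a)) (fun n => f (a * -n)) (hf.comp' _)]
      congr 1; ext n; congr 1; field_simp; ring
  rw [h1, QE, QE]
  rcases lt_or_gt_of_ne ha with ha | ha
  · rw [← Pd (-a) (fun n => f n) (by linarith) hf, ← Pd (-a) (fun n => f (-n)) (by linarith)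
      (hf.comp' _), add_comm]
    simp
  · rw [← Pd a (fun n => f n) ha hf, ← Pd a (fun n => f (-n)) ha (hf.comp' _)]
    simp


section
open UniformSpace

/-- Extend a representation to the completion. -/
noncomputable def QRep.ofPre {V : Type} [SeminormedAddCommGroup V] [InnerProductSpace ℝ V]
    (U : ℚ → V →L[ℝ] V) (zero : ∀ v, U 0 v = 0) (one : ∀ v, U 1 v = v)
    (mul : ∀ x y v, U (x * y) v = U x (U y v)) (le : ∀ x v, ‖U x v‖ ≤ ‖v‖)
    (adj : ∀ x v w, inner ℝ (U x v) w = inner ℝ v (U x⁻¹ w)) : QRep (Completion V) where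
  u x := (U x).completion
  zero v := by
    refine Completion.induction_on v (isClosed_eq (by fun_prop) (by fun_prop)) fun a => ?_
    rw [ContinuousLinearMap.completion_apply_coe, zero, Completion.coe_zero]
  one v := by
    refine Completion.induction_on v (isClosed_eq (by fun_prop) (by fun_prop)) fun a => ?_
    rw [ContinuousLinearMap.completion_apply_coe, one]
  mul x y v := by
    refine Completion.induction_on v (isClosed_eq (by fun_prop) (by fun_prop)) fun a => ?_
    simp only [ContinuousLinearMap.completion_apply_coe, mul]
  le x v := by
    refine Completion.induction_on v (isClosed_le (by fun_prop) (by fun_prop)) fun a => ?_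
    simp only [ContinuousLinearMap.completion_apply_coe, Completion.norm_coe, le]
  adj x v w := by
    refine Completion.induction_on₂ v w (isClosed_eq (by fun_prop) (by fun_prop)) fun a b => ?_
    simp only [ContinuousLinearMap.completion_apply_coe, Completion.inner_coe, adj]

end

/-- bounded functions -/
def bdSub : Submodule ℝ (ℚ → ℝ) where
  carrier := {f | Bd f}
  add_mem' hf hg := hf.add hg
  zero_mem' := Bd.const 0
  smul_mem' c f hf := (Bd.const c).mul hf

def BF (M : Mean ℚ) : Type := bdSub

namespace BF
variable (M : Mean ℚ)

noncomputable instance : AddCommGroup (BF M) := inferInstanceAs (AddCommGroup bdSub)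
noncomputable instance : Module ℝ (BF M) := inferInstanceAs (Module ℝ bdSub)

variable {M}
def fn (f : BF M) : ℚ → ℝ := f.1
theorem bd (f : BF M) : Bd f.fn := f.2
theorem fn_ext {f g : BF M} (h : ∀ n, f.fn n = g.fn n) : f = g := Subtype.ext (funext h)
theorem fn_add (f g : BF M) (n : ℚ) : (f + g).fn n = f.fn n + g.fn n := rfl
theorem fn_smul (c : ℝ) (f : BF M) (n : ℚ) : (c • f).fn n = c * f.fn n := rfl
theorem fn_zero (n : ℚ) : (0 : BF M).fn n = 0 := rfl
def mk (f : ℚ → ℝ) (hf : Bd f) : BF M := ⟨f, hf⟩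
theorem fn_mk (f : ℚ → ℝ) (hf : Bd f) : (mk f hf : BF M).fn = f := rfl

variable (M)
@[reducible]
noncomputable def core : PreInnerProductSpace.Core ℝ (BF M) where
  inner f g := M.E (fun n => f.fn n * g.fn n)
  conj_inner_symm f g := by simp [mul_comm]
  re_inner_nonneg f := by
    simp only [RCLike.re_to_real]
    exact M.const_le (f.bd.mul f.bd) fun n => mul_self_nonneg _
  add_left f g h := by
    simp only [fn_add, add_mul]
    exact M.add _ _ (f.bd.mul h.bd) (g.bd.mul h.bd)
  smul_left f g r := by
    simp only [fn_smul, mul_assoc]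
    exact M.smul _ _ (f.bd.mul g.bd)

noncomputable instance : SeminormedAddCommGroup (BF M) :=
  @InnerProductSpace.Core.toSeminormedAddCommGroup ℝ (BF M) _ _ _ (core M)
noncomputable instance : InnerProductSpace ℝ (BF M) := InnerProductSpace.ofCore (core M)

variable {M}
theorem inner_def (f g : BF M) : inner ℝ f g = M.E (fun n => f.fn n * g.fn n) := rfl

theorem norm_sq (f : BF M) : ‖f‖ ^ 2 = M.E (fun n => f.fn n * f.fn n) := by
  rw [← real_inner_self_eq_norm_sq, inner_def]

noncomputable def dilL (x : ℚ) : BF M →ₗ[ℝ] BF M where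
  toFun f := if x = 0 then 0 else mk (fun n => f.fn (|x| * n)) (f.bd.comp' _)
  map_add' f g := by
    split_ifs
    · simp
    · rfl
  map_smul' c f := by
    split_ifs
    · simp
    · rfl

theorem dilL_zero (f : BF M) : dilL 0 f = 0 := by simp [dilL]
theorem dilL_fn {x : ℚ} (hx : x ≠ 0) (f : BF M) (n : ℚ) : (dilL x f).fn n = f.fn (|x| * n) := by
  simp [dilL, hx, fn_mk]

theorem dilL_norm (hM : M.MulInv) (x : ℚ) (f : BF M) : ‖dilL x f‖ ≤ ‖f‖ := by
  by_cases hx : x = 0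
  · rw [hx, dilL_zero, norm_zero]; exact norm_nonneg _
  · apply le_of_eq
    rw [← sq_eq_sq₀ (norm_nonneg _) (norm_nonneg _), norm_sq, norm_sq]
    simp only [dilL_fn hx]
    exact hM.dil |x| (fun n => f.fn n * f.fn n) (abs_pos.2 hx) (f.bd.mul f.bd)

noncomputable def dil (hM : M.MulInv) (x : ℚ) : BF M →L[ℝ] BF M :=
  (dilL x).mkContinuous 1 (fun f => by simpa using dilL_norm hM x f)

theorem dil_apply (hM : M.MulInv) (x : ℚ) (f : BF M) : dil hM x f = dilL x f := rfl

noncomputable def rep (hM : M.MulInv) : QRep (UniformSpace.Completion (BF M)) :=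
  QRep.ofPre (dil hM) (fun v => dilL_zero v)
    (fun v => fn_ext fun n => by rw [dil_apply, dilL_fn one_ne_zero]; simp)
    (fun x y v => by
      simp only [dil_apply]
      by_cases hx : x = 0
      · simp [hx, dilL_zero]
      by_cases hy : y = 0
      · simp [hy, dilL_zero]
      refine fn_ext fun n => ?_
      rw [dilL_fn (mul_ne_zero hx hy), dilL_fn hx, dilL_fn hy, abs_mul]
      congr 1; ring)
    (fun x v => dilL_norm hM x v)
    (fun x v w => by
      simp only [dil_apply]
      by_cases hx : x = 0
      · simp [hx, dilL_zero]
      rw [inner_def, inner_def, ← hM.dil |x| (fun n => v.fn n * (dilL x⁻¹ w).fn n) (abs_pos.2 hx)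
        (v.bd.mul (bd _))]
      congr 1; ext n
      rw [dilL_fn hx, dilL_fn (inv_ne_zero hx), abs_inv, inv_mul_cancel_left₀ (abs_ne_zero.2 hx)])

theorem rep_coe (hM : M.MulInv) (x : ℚ) (f : BF M) :
    (rep hM).u x (f : UniformSpace.Completion (BF M)) = ((dilL x f : BF M) : UniformSpace.Completion (BF M)) :=
  ContinuousLinearMap.completion_apply_coe _ _

end BF

theorem concrete_main {M : Mean ℚ} (hM : M.MulInv) {W : ℚ → ℝ} (hW : Bd W) (hpos : 0 < M.E W)
    {ε : ℚ} (hε : ε^2 = 1) {κ : ℚ} (hκ : κ ≠ 0) (T : Finset ℚ) :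
    ∃ t : ℚ, t ∉ T ∧ κ * (t / (t^2 - ε)) ≠ 0 ∧
      M.E (fun n => W (|κ * (t / (t^2 - ε))| * n) * W n) ≠ 0 := by
  obtain ⟨l, hl⟩ := exists_aff hM
  by_contra hcon
  push Not at hcon
  have key := (BF.rep hM).abstract_main hl hε hκ T
    (v := ((BF.mk W hW : BF M) : UniformSpace.Completion (BF M)))
    (e := ((BF.mk (fun _ => 1) (Bd.const 1) : BF M) : UniformSpace.Completion (BF M)))
    ?_ ?_
  · rw [UniformSpace.Completion.inner_coe, BF.inner_def] at key
    simp only [BF.fn_mk, mul_one] at key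
    exact hpos.ne' key
  · rw [QRep.mem_Inv]
    intro x hx
    rw [BF.rep_coe]
    congr 1
    refine BF.fn_ext fun n => ?_
    rw [BF.dilL_fn hx]; rfl
  · intro t ht
    rw [BF.rep_coe, UniformSpace.Completion.inner_coe]
    by_cases h0 : κ * (t / (t^2 - ε)) = 0
    · rw [h0, BF.dilL_zero, inner_zero_left]
    · rw [BF.inner_def]
      simp only [BF.dilL_fn h0, BF.fn_mk]
      exact hcon t ht h0


open scoped Classical in
noncomputable def indW (S : Set ℕ) : ℚ → ℝ := fun q => if ∃ n ∈ S, (n : ℚ) = q then 1 else 0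

theorem indW_bd (S : Set ℕ) : Bd (indW S) := by
  classical
  exact ⟨1, fun q => by unfold indW; split_ifs <;> simp⟩

theorem indW_nat (S : Set ℕ) (n : ℕ) (h : indW S n ≠ 0) : n ∈ S := by
  classical
  unfold indW at h
  split_ifs at h with h'
  · obtain ⟨m, hm, e⟩ := h'
    have : m = n := by exact_mod_cast e
    exact this ▸ hm
  · exact absurd rfl h

theorem get_nat {M : Mean ℚ} (hM : M.MulInv) (S : Set ℕ) (p q : ℕ) (hp : 0 < p) (hq : 0 < q)
    {r : ℚ} (hr : r = p / q) (h : M.E (fun n => indW S (r * n) * indW S n) ≠ 0) :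
    ∃ n : ℕ, 0 < n ∧ p * n ∈ S ∧ q * n ∈ S := by
  by_contra hcon
  push Not at hcon
  apply h
  have hq' : (0 : ℚ) < q := by exact_mod_cast hq
  rw [← hM.dil q _ hq' (((indW_bd S).comp' _).mul (indW_bd S)), ← M.const 0]
  apply hM.pos
  intro n hn
  have e1 : r * ((q : ℚ) * n) = ((p * n : ℕ) : ℚ) := by
    rw [hr]; push_cast; field_simp
  have e2 : (q : ℚ) * n = ((q * n : ℕ) : ℚ) := by push_cast; rfl
  rw [e1, e2]
  by_contra hne
  have h1 := indW_nat S _ (left_ne_zero_of_mul hne)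
  have h2 := indW_nat S _ (right_ne_zero_of_mul hne)
  exact hcon n hn h1 h2

theorem quad_finite (κ ε : ℚ) : ∃ T : Finset ℚ, ∀ t : ℚ, t ^ 2 - κ * t - ε = 0 → t ∈ T := by
  let P : Polynomial ℚ := Polynomial.X ^ 2 - Polynomial.C κ * Polynomial.X - Polynomial.C ε
  have hP : P ≠ 0 := by
    intro h
    have := congrArg (fun Q => Polynomial.coeff Q 2) h
    simp [P, Polynomial.coeff_X, Polynomial.coeff_C] at this
  refine ⟨P.roots.toFinset, fun t ht => ?_⟩
  rw [Multiset.mem_toFinset, Polynomial.mem_roots hP]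
  simpa [P, Polynomial.IsRoot] using ht

/-- choose good parameters -/
theorem choose_t {M : Mean ℚ} (hM : M.MulInv) (S : Set ℕ) (hpos : 0 < M.E (indW S))
    {ε : ℚ} (hε : ε^2 = 1) {κ : ℚ} (hκ : 0 < κ) :
    ∃ p l : ℕ, 0 < p ∧ 0 < l ∧ p ≠ l ∧ (p : ℚ) ^ 2 - ε * l ^ 2 ≠ 0 ∧
      κ * p * l / |(p : ℚ) ^ 2 - ε * l ^ 2| ≠ 1 ∧
      M.E (fun n => indW S (κ * p * l / |(p : ℚ) ^ 2 - ε * l ^ 2| * n) * indW S n) ≠ 0 := by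
  obtain ⟨T1, hT1⟩ := quad_finite κ ε
  obtain ⟨T2, hT2⟩ := quad_finite (-κ) ε
  obtain ⟨t, ht, h0, h⟩ := concrete_main hM (indW_bd S) hpos hε hκ.ne' (T1 ∪ T2 ∪ {1, -1})
  simp only [Finset.mem_union, Finset.mem_insert, Finset.mem_singleton, not_or] at ht
  obtain ⟨⟨ht1, ht2⟩, ht3, ht4⟩ := ht
  have htne : t ≠ 0 := by rintro rfl; simp at h0
  have hden : t ^ 2 - ε ≠ 0 := by intro e; simp [e] at h0
  have hl : (0 : ℚ) < t.den := by exact_mod_cast t.den_pos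
  have habs : |t| = (t.num.natAbs : ℚ) / t.den := by
    conv_lhs => rw [← Rat.num_div_den t]
    rw [abs_div, Nat.cast_natAbs, Nat.abs_cast, Int.cast_abs]
  have hpn : 0 < t.num.natAbs := Int.natAbs_pos.2 (Rat.num_ne_zero.2 htne)
  have hp' : (0 : ℚ) < t.num.natAbs := by exact_mod_cast hpn
  have e2 : t ^ 2 - ε = ((t.num.natAbs : ℚ) ^ 2 - ε * (t.den : ℚ) ^ 2) / (t.den : ℚ) ^ 2 := by
    rw [← sq_abs t, habs]
    field_simp
  have hr : |κ * (t / (t ^ 2 - ε))| =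
      κ * (t.num.natAbs : ℚ) * t.den / |(t.num.natAbs : ℚ) ^ 2 - ε * (t.den : ℚ) ^ 2| := by
    have hne : (t.num.natAbs : ℚ) ^ 2 - ε * (t.den : ℚ) ^ 2 ≠ 0 := by
      intro e; rw [e, zero_div] at e2; exact hden e2
    rw [abs_mul, abs_div, abs_of_pos hκ, habs, e2, abs_div, abs_of_pos (pow_pos hl 2)]
    have := abs_ne_zero.2 hne
    field_simp
  refine ⟨t.num.natAbs, t.den, hpn, t.den_pos, ?_, ?_, ?_, ?_⟩
  · intro e
    rw [e, div_self hl.ne'] at habs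
    rcases eq_or_eq_neg_of_abs_eq habs with h | h
    · exact ht3 h
    · exact ht4 h
  · intro e; rw [e, zero_div] at e2; exact hden e2
  · rw [← hr]
    intro e
    rcases eq_or_eq_neg_of_abs_eq e with h | h
    · apply ht1
      apply hT1
      field_simp at h
      linarith
    · apply ht2
      apply hT2
      field_simp at h
      linarith
  · rw [← hr]; exact h

theorem case_one {M : Mean ℚ} (hM : M.MulInv) (S : Set ℕ) (hpos : 0 < M.E (indW S))
    (α β γ : ℕ) (hα : 0 < α) (hβ : 0 < β) (hγ : 0 < γ) :
    ∃ x ∈ S, ∃ y ∈ S, x ≠ y ∧ ∃ z : ℕ, 0 < z ∧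
      α * α * x ^ 2 + β * β * y ^ 2 = γ * γ * z ^ 2 := by
  have hα' : (0 : ℚ) < α := by exact_mod_cast hα
  have hβ' : (0 : ℚ) < β := by exact_mod_cast hβ
  have hγ' : (0 : ℚ) < γ := by exact_mod_cast hγ
  obtain ⟨p, l, hp, hl, hpl, hne, h1, h⟩ := choose_t hM S hpos (ε := 1) (by norm_num)
    (κ := 2 * α / β) (by positivity)
  obtain ⟨d, hd, hd2⟩ : ∃ d : ℕ, (d : ℚ) = |(p : ℚ) ^ 2 - 1 * (l : ℚ) ^ 2| ∧
      (d : ℤ) ^ 2 = ((p : ℤ) ^ 2 - (l : ℤ) ^ 2) ^ 2 := by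
    refine ⟨((p : ℤ) ^ 2 - (l : ℤ) ^ 2).natAbs, ?_, ?_⟩
    · rw [Nat.cast_natAbs]; push_cast; simp
    · simp
  have hd0 : (0 : ℚ) < d := by rw [hd]; exact abs_pos.2 hne
  have hdn : 0 < d := by exact_mod_cast hd0
  rw [← hd] at h1 h
  have hr : 2 * (α : ℚ) / β * p * l / d = ((2 * α * γ * p * l : ℕ) : ℚ) / ((β * γ * d : ℕ) : ℚ) := by
    push_cast; field_simp
  obtain ⟨n, hn, hy, hx⟩ := get_nat hM S (2 * α * γ * p * l) (β * γ * d) (by positivity)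
    (by positivity) hr h
  refine ⟨_, hx, _, hy, ?_, α * β * (p ^ 2 + l ^ 2) * n, by positivity, ?_⟩
  · intro e
    apply h1
    rw [hr, ← Nat.eq_of_mul_eq_mul_right hn e, div_self]
    have : 0 < β * γ * d := by positivity
    exact_mod_cast this.ne'
  · zify
    linear_combination (α : ℤ) ^ 2 * β ^ 2 * γ ^ 2 * n ^ 2 * hd2

theorem case_two {M : Mean ℚ} (hM : M.MulInv) (S : Set ℕ) (hpos : 0 < M.E (indW S))
    (α β γ : ℕ) (hα : 0 < α) (hβ : 0 < β) (hγ : 0 < γ) :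
    ∃ y ∈ S, ∃ z ∈ S, y ≠ z ∧ ∃ x : ℕ, 0 < x ∧
      α * α * x ^ 2 + β * β * y ^ 2 = γ * γ * z ^ 2 := by
  have hα' : (0 : ℚ) < α := by exact_mod_cast hα
  have hβ' : (0 : ℚ) < β := by exact_mod_cast hβ
  have hγ' : (0 : ℚ) < γ := by exact_mod_cast hγ
  obtain ⟨p, l, hp, hl, hpl, hne, h1, h⟩ := choose_t hM S hpos (ε := -1) (by norm_num)
    (κ := 2 * γ / β) (by positivity)
  obtain ⟨d, hd0, hd2⟩ : ∃ d : ℕ, d ≠ 0 ∧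
      (d : ℤ) ^ 2 = ((p : ℤ) ^ 2 - (l : ℤ) ^ 2) ^ 2 := by
    refine ⟨((p : ℤ) ^ 2 - (l : ℤ) ^ 2).natAbs, ?_, ?_⟩
    · intro e
      rw [Int.natAbs_eq_zero, sub_eq_zero] at e
      have e' : p ^ 2 = l ^ 2 := by exact_mod_cast e
      exact hpl (Nat.pow_left_injective (n := 2) (by norm_num) e')
    · simp
  have hl' : (0 : ℚ) < l := by exact_mod_cast hl
  have hdn : 0 < d := Nat.pos_of_ne_zero hd0
  have ha : |(p : ℚ) ^ 2 - -1 * (l : ℚ) ^ 2| = (p : ℚ) ^ 2 + (l : ℚ) ^ 2 := by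
    rw [neg_one_mul, sub_neg_eq_add, abs_of_pos (by positivity)]
  rw [ha] at h1 h
  have hr : 2 * (γ : ℚ) / β * p * l / ((p : ℚ) ^ 2 + (l : ℚ) ^ 2) =
      ((2 * α * γ * p * l : ℕ) : ℚ) / ((α * β * (p ^ 2 + l ^ 2) : ℕ) : ℚ) := by
    push_cast; field_simp
  obtain ⟨n, hn, hy, hz⟩ := get_nat hM S (2 * α * γ * p * l) (α * β * (p ^ 2 + l ^ 2))
    (by positivity) (by positivity) hr h
  refine ⟨_, hy, _, hz, ?_, β * γ * d * n, by positivity, ?_⟩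
  · intro e
    apply h1
    rw [hr, Nat.eq_of_mul_eq_mul_right hn e, div_self]
    have : 0 < α * β * (p ^ 2 + l ^ 2) := by positivity
    exact_mod_cast this.ne'
  · zify
    linear_combination (α : ℤ) ^ 2 * β ^ 2 * γ ^ 2 * n ^ 2 * hd2


/-- **Density regularity of Pythagorean pairs** (Theorem 1.2). If `a, b, c` are positive
perfect squares and `Λ` has positive multiplicative density, then (1) there are distinct
`x, y ∈ Λ` and some `z` with `a x² + b y² = c z²`, and (2) there are distinct
`y, z ∈ Λ` and some `x` with `a x² + b y² = c z²`. -/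
theorem pythagorean_pairs_density
    (a b c : ℕ) (ha : 0 < a) (hb : 0 < b) (hc : 0 < c)
    (hasq : IsSquare a) (hbsq : IsSquare b) (hcsq : IsSquare c)
    (Λ : Set ℕ) (hΛpos : ∀ n ∈ Λ, 0 < n)
    (Φ : ℕ → Finset ℕ) (hΦ : IsMulFolner Φ) (hdens : 0 < upMulDens Φ Λ) :
    (∃ x ∈ Λ, ∃ y ∈ Λ, x ≠ y ∧ ∃ z : ℕ, 0 < z ∧ a * x ^ 2 + b * y ^ 2 = c * z ^ 2) ∧
    (∃ y ∈ Λ, ∃ z ∈ Λ, y ≠ z ∧ ∃ x : ℕ, 0 < x ∧ a * x ^ 2 + b * y ^ 2 = c * z ^ 2) := by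
  classical
  obtain ⟨α, rfl⟩ := hasq
  obtain ⟨β, rfl⟩ := hbsq
  obtain ⟨γ, rfl⟩ := hcsq
  have hα : 0 < α := Nat.pos_of_mul_pos_left ha
  have hβ : 0 < β := Nat.pos_of_mul_pos_left hb
  have hγ : 0 < γ := Nat.pos_of_mul_pos_left hc
  obtain ⟨hne, hpos, hF⟩ := hΦ
  have hfr : ∃ᶠ K in atTop, upMulDens Φ Λ / 2 ≤
      (∑ n ∈ Φ K, indW Λ (n : ℚ)) / ((Φ K).card : ℝ) := by
    have h2 : upMulDens Φ Λ / 2 < upMulDens Φ Λ := by linarith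
    have h3 := Filter.frequently_lt_of_lt_limsup (f := atTop)
      (u := fun K => (((Φ K).filter (fun n => n ∈ Λ)).card : ℝ) / ((Φ K).card : ℝ))
      (Filter.isCoboundedUnder_le_of_le atTop (x := 0) fun K => by positivity)
      (b := upMulDens Φ Λ / 2) (by unfold upMulDens at h2 ⊢; convert h2)
    refine h3.mono fun K hK => hK.le.trans (le_of_eq ?_)
    congr 1
    rw [Finset.card_filter]
    push_cast
    refine Finset.sum_congr rfl fun n _ => ?_
    unfold indW
    simp only [Nat.cast_inj, exists_eq_right]
  obtain ⟨M, hM, hW⟩ := exists_mulInv Φ hne hpos hF (fun n => indW Λ n)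
    ((indW_bd Λ).comp' _) _ hfr
  have hp : 0 < M.E (indW Λ) :=
    lt_of_lt_of_le (by linarith) (hW (indW Λ) (indW_bd Λ) fun n => rfl)
  exact ⟨case_one hM Λ hp α β γ hα hβ hγ, case_two hM Λ hp α β γ hα hβ hγ⟩
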